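/- arXiv:0807.3890 — 2 statements merged into one kernel-verified Lean document; each statement's English description precedes it below -/
import Mathlib

section
/- Let H be a Hopf monoid in a symmetric monoidal category C (i.e. the braiding satisfies ψ_{Y,X} ∘ ψ_{X,Y} = id for all objects X, Y), and let (δ, σ) be a braided modular pair in involution for H. Then for every n ≥ 1 the (n+1)-fold composite τ_n ∘ ⋯ ∘ τ_n equals id_{H^{⊗n}}. -/
open CategoryTheory MonoidalCategory

universe v u

/-- A Hopf algebra object (a "braided Hopf algebra") in a braided monoidal category `C`,
consisting of an object `X` with multiplication `mul`, unit `one`, comultiplication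
`comul`, counit `counit` and antipode `antipode`, satisfying the usual axioms, with
the compatibility of `mul` and `comul` expressed via the braiding. -/
structure HopfObj (C : Type u) [Category.{v} C] [MonoidalCategory C]
    [BraidedCategory C] where
  X : C
  mul : X ⊗ X ⟶ X
  one : 𝟙_ C ⟶ X
  comul : X ⟶ X ⊗ X
  counit : X ⟶ 𝟙_ C
  antipode : X ⟶ X
  mul_assoc : (mul ▷ X) ≫ mul = (α_ X X X).hom ≫ (X ◁ mul) ≫ mul
  one_mul : (one ▷ X) ≫ mul = (λ_ X).hom
  mul_one : (X ◁ one) ≫ mul = (ρ_ X).hom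
  comul_assoc : comul ≫ (comul ▷ X) ≫ (α_ X X X).hom = comul ≫ (X ◁ comul)
  counit_comul : comul ≫ (counit ▷ X) = (λ_ X).inv
  comul_counit : comul ≫ (X ◁ counit) = (ρ_ X).inv
  mul_comul : mul ≫ comul =
      (comul ⊗ₘ comul) ≫ (α_ X X (X ⊗ X)).hom ≫ (X ◁ (α_ X X X).inv) ≫
        (X ◁ ((β_ X X).hom ▷ X)) ≫ (X ◁ (α_ X X X).hom) ≫
        (α_ X X (X ⊗ X)).inv ≫ (mul ⊗ₘ mul)
  one_comul : one ≫ comul = (λ_ (𝟙_ C)).inv ≫ (one ⊗ₘ one)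
  mul_counit : mul ≫ counit = (counit ⊗ₘ counit) ≫ (λ_ (𝟙_ C)).hom
  one_counit : one ≫ counit = 𝟙 (𝟙_ C)
  antipode_left : comul ≫ (antipode ▷ X) ≫ mul = counit ≫ one
  antipode_right : comul ≫ (X ◁ antipode) ≫ mul = counit ≫ one

variable {C : Type u} [Category.{v} C] [MonoidalCategory C] [SymmetricCategory C]

/-- The `δ`-twisted antipode `S̃ = λ_H ∘ (δ ⊗ S) ∘ Δ`. -/
def HopfObj.twist (A : _root_.HopfObj C) (δ : A.X ⟶ 𝟙_ C) : A.X ⟶ A.X :=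
  A.comul ≫ (δ ⊗ₘ A.antipode) ≫ (λ_ A.X).hom

/-- `δ : H ⟶ 𝟙` is a character, i.e. a morphism of monoid objects. -/
def HopfObj.IsCharacter (A : _root_.HopfObj C) (δ : A.X ⟶ 𝟙_ C) : Prop :=
  A.mul ≫ δ = (δ ⊗ₘ δ) ≫ (λ_ (𝟙_ C)).hom ∧ A.one ≫ δ = 𝟙 (𝟙_ C)

/-- `σ : 𝟙 ⟶ H` is a cocharacter, i.e. a morphism of comonoid objects. -/
def HopfObj.IsCocharacter (A : _root_.HopfObj C) (σ : 𝟙_ C ⟶ A.X) : Prop :=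
  σ ≫ A.comul = (λ_ (𝟙_ C)).inv ≫ (σ ⊗ₘ σ) ∧ σ ≫ A.counit = 𝟙 (𝟙_ C)

/-- The morphism `m ∘ (m ⊗ 1_H) ∘ ((S ∘ σ) ⊗ (S̃ ∘ S̃) ⊗ σ) : H ⟶ H`
(with unitors inserted). -/
def HopfObj.bmpiMap (A : _root_.HopfObj C) (δ : A.X ⟶ 𝟙_ C) (σ : 𝟙_ C ⟶ A.X) :
    A.X ⟶ A.X :=
  (λ_ A.X).inv ≫ ((σ ≫ A.antipode) ⊗ₘ (A.twist δ ≫ A.twist δ)) ≫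
    (ρ_ (A.X ⊗ A.X)).inv ≫ ((A.X ⊗ A.X) ◁ σ) ≫ (A.mul ▷ A.X) ≫ A.mul

/-- `(δ, σ)` is a braided modular pair in involution. -/
def HopfObj.IsBMPI (A : _root_.HopfObj C) (δ : A.X ⟶ 𝟙_ C) (σ : 𝟙_ C ⟶ A.X) : Prop :=
  σ ≫ δ = 𝟙 (𝟙_ C) ∧ A.bmpiMap δ σ = 𝟙 A.X

/-- Tensor powers, with `H^{⊗0} = 𝟙`, `H^{⊗1} = H` and `H^{⊗(n+1)} = H^{⊗n} ⊗ H`. -/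
def tensorPow (H : C) : ℕ → C
  | 0 => 𝟙_ C
  | 1 => H
  | n + 2 => tensorPow H (n + 1) ⊗ H

/-- The coherence isomorphism `H ⊗ H^{⊗n} ≅ H^{⊗(n+1)}`. -/
def tensorPowCons (H : C) : ∀ n : ℕ, H ⊗ tensorPow H n ≅ tensorPow H (n + 1)
  | 0 => ρ_ H
  | 1 => Iso.refl (H ⊗ H)
  | n + 2 => (α_ H (tensorPow H (n + 1)) H).symm ≪≫
      whiskerRightIso (tensorPowCons H (n + 1)) H

/-- Iterated multiplication `m_{n+1}` of the braided tensor product algebra structure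
on `H^{⊗(n+1)}`:  `m₁ = m` and
`m_{n+1} = (m_n ⊗ m) ∘ (1_{H^{⊗n}} ⊗ ψ_{H,H^{⊗n}} ⊗ 1_H)`. -/
def HopfObj.iterMul (A : _root_.HopfObj C) :
    ∀ n : ℕ, tensorPow A.X (n + 1) ⊗ tensorPow A.X (n + 1) ⟶ tensorPow A.X (n + 1)
  | 0 => A.mul
  | n + 1 =>
      (α_ (tensorPow A.X (n + 1)) A.X (tensorPow A.X (n + 1) ⊗ A.X)).hom ≫
      (tensorPow A.X (n + 1) ◁ (α_ A.X (tensorPow A.X (n + 1)) A.X).inv) ≫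
      (tensorPow A.X (n + 1) ◁ ((β_ A.X (tensorPow A.X (n + 1))).hom ▷ A.X)) ≫
      (tensorPow A.X (n + 1) ◁ (α_ (tensorPow A.X (n + 1)) A.X A.X).hom) ≫
      (α_ (tensorPow A.X (n + 1)) (tensorPow A.X (n + 1)) (A.X ⊗ A.X)).inv ≫
      (HopfObj.iterMul A n ⊗ₘ A.mul)

/-- Iterated comultiplication `Δ⁰ = 1_H`, `Δⁿ = (1_H ⊗ Δ^{n-1}) ∘ Δ : H ⟶ H^{⊗(n+1)}`
(up to coherence isomorphisms). -/
def HopfObj.iterComul (A : _root_.HopfObj C) : ∀ n : ℕ, A.X ⟶ tensorPow A.X (n + 1)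
  | 0 => 𝟙 A.X
  | n + 1 => A.comul ≫ (A.X ◁ HopfObj.iterComul A n) ≫ (tensorPowCons A.X (n + 1)).hom

/-- Appending `σ` as a last tensor factor, via `H^{⊗n} ≅ H^{⊗n} ⊗ 𝟙`. -/
def tensorPowSnoc (H : C) (σ : 𝟙_ C ⟶ H) : ∀ n : ℕ, tensorPow H n ⟶ tensorPow H (n + 1)
  | 0 => σ
  | n + 1 => (ρ_ (tensorPow H (n + 1))).inv ≫ (tensorPow H (n + 1) ◁ σ)

/-- The cyclic operator `τ_{n+1} = m_{n+1} ∘ ((Δⁿ ∘ S̃) ⊗ 1_{H^{⊗n}} ⊗ σ)` on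
`H^{⊗(n+1)}`, where the first tensor factor of `H^{⊗(n+1)} ≅ H ⊗ H^{⊗n}` is mapped by
`Δⁿ ∘ S̃` and `σ` is appended via `H^{⊗n} ≅ H^{⊗n} ⊗ 𝟙`. -/
def HopfObj.cyclicOp (A : _root_.HopfObj C) (δ : A.X ⟶ 𝟙_ C) (σ : 𝟙_ C ⟶ A.X) (n : ℕ) :
    tensorPow A.X (n + 1) ⟶ tensorPow A.X (n + 1) :=
  (tensorPowCons A.X n).inv ≫
    ((A.twist δ ≫ A.iterComul n) ⊗ₘ tensorPowSnoc A.X σ n) ≫ A.iterMul n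

/-- `Ψ_{n+1} : H^{⊗(n+1)} ⟶ H^{⊗(n+1)}`, the braiding `ψ_{H^{⊗n},H}` conjugated by the
coherence isomorphisms `H^{⊗(n+1)} ≅ H^{⊗n} ⊗ H` and `H ⊗ H^{⊗n} ≅ H^{⊗(n+1)}`
(and `Ψ₁ = 1_H`). -/
def tensorPowBraid (H : C) : ∀ n : ℕ, tensorPow H (n + 1) ⟶ tensorPow H (n + 1)
  | 0 => 𝟙 H
  | n + 1 => (β_ (tensorPow H (n + 1)) H).hom ≫ (tensorPowCons H (n + 1)).hom

/-- The `n`-fold composite of an endomorphism. -/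
def endoPow {X : C} (f : X ⟶ X) : ℕ → (X ⟶ X)
  | 0 => 𝟙 X
  | n + 1 => f ≫ endoPow f n


namespace CycAux
variable (A : _root_.HopfObj C)

/-- action axioms -/
structure IsAct {M : C} (a : A.X ⊗ M ⟶ M) : Prop where
  assoc : A.mul ▷ M ≫ a = (α_ A.X A.X M).hom ≫ A.X ◁ a ≫ a
  unit : A.one ▷ M ≫ a = (λ_ M).hom

/-- `h ⊗ x ↦ h₁ x ⊗ h₂`. -/
def ent {M : C} (a : A.X ⊗ M ⟶ M) : A.X ⊗ M ⟶ M ⊗ A.X :=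
  A.comul ▷ M ≫ (α_ _ _ _).hom ≫ A.X ◁ (β_ A.X M).hom ≫ (α_ _ _ _).inv ≫ a ▷ A.X

/-- tensor product action -/
def tact {M N : C} (a : A.X ⊗ M ⟶ M) (b : A.X ⊗ N ⟶ N) : A.X ⊗ (M ⊗ N) ⟶ M ⊗ N :=
  (α_ _ _ _).inv ≫ ent A a ▷ N ≫ (α_ _ _ _).hom ≫ M ◁ b

theorem ent_unit {M : C} {a : A.X ⊗ M ⟶ M} (ha : IsAct A a) :
    A.one ▷ M ≫ ent A a = (λ_ M).hom ≫ (ρ_ M).inv ≫ M ◁ A.one := by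
  unfold ent
  calc _ = (A.one ≫ A.comul) ▷ M ⊗≫ A.X ◁ (β_ A.X M).hom ⊗≫ a ▷ A.X := by monoidal
    _ = 𝟙 _ ⊗≫ A.one ▷ 𝟙_ C ▷ M ⊗≫ A.X ◁ (A.one ▷ M ≫ (β_ A.X M).hom) ⊗≫ a ▷ A.X := by
      rw [A.one_comul, MonoidalCategory.tensorHom_def]; monoidal
    _ = 𝟙 _ ⊗≫ A.one ▷ M ⊗≫ ((A.X ⊗ M) ◁ A.one ≫ a ▷ A.X) := by
      rw [BraidedCategory.braiding_naturality_left, braiding_tensorUnit_left]; monoidal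
    _ = 𝟙 _ ⊗≫ (A.one ▷ M ≫ a) ⊗≫ M ◁ A.one := by
      rw [whisker_exchange]; monoidal
    _ = _ := by rw [ha.unit]; monoidal

theorem ent_counit {M : C} (a : A.X ⊗ M ⟶ M) :
    ent A a ≫ M ◁ A.counit = a ≫ (ρ_ M).inv := by
  unfold ent
  simp only [Category.assoc, ← whisker_exchange, ← associator_inv_naturality_right_assoc, ← whiskerLeft_comp_assoc,
    ← BraidedCategory.braiding_naturality_left]
  simp only [whiskerLeft_comp, Category.assoc, ← associator_naturality_middle_assoc, ← comp_whiskerRight_assoc, A.comul_counit]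
  simp

theorem mul_comul' : A.mul ≫ A.comul =
    A.X ◁ A.comul ≫ (α_ _ _ _).inv ≫ ent A A.mul ▷ A.X ≫ (α_ _ _ _).hom ≫ A.X ◁ A.mul := by
  rw [A.mul_comul]
  unfold ent
  simp only [MonoidalCategory.tensorHom_def]
  calc _ = 𝟙 _ ⊗≫ (A.comul ▷ A.X ≫ (A.X ⊗ A.X) ◁ A.comul) ⊗≫ A.X ◁ (β_ A.X A.X).hom ▷ A.X ⊗≫
        A.mul ▷ (A.X ⊗ A.X) ⊗≫ A.X ◁ A.mul := by monoidal
    _ = _ := by rw [← whisker_exchange]; monoidal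

theorem ent_comul {M : C} (a : A.X ⊗ M ⟶ M) :
    ent A a ≫ M ◁ A.comul = A.comul ▷ M ≫ (α_ _ _ _).hom ≫ A.X ◁ (β_ A.X M).hom ≫
      (α_ _ _ _).inv ≫ ent A a ▷ A.X ≫ (α_ _ _ _).hom := by
  unfold ent
  simp only [Category.assoc, ← whisker_exchange, ← associator_inv_naturality_right_assoc, ← whiskerLeft_comp_assoc,
    ← BraidedCategory.braiding_naturality_left]
  simp only [whiskerLeft_comp, Category.assoc, ← associator_naturality_middle_assoc, ← comp_whiskerRight_assoc, ← A.comul_assoc]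
  simp only [BraidedCategory.braiding_tensor_left_hom]
  calc _ = 𝟙 _ ⊗≫ A.comul ▷ M ⊗≫ (A.comul ▷ (A.X ⊗ M) ≫ (A.X ⊗ A.X) ◁ (β_ A.X M).hom) ⊗≫
        A.X ◁ (β_ A.X M).hom ▷ A.X ⊗≫ a ▷ A.X ▷ A.X ⊗≫ 𝟙 _ := by monoidal
    _ = _ := by rw [← whisker_exchange]; monoidal

theorem ent_mul {M : C} {a : A.X ⊗ M ⟶ M} (ha : IsAct A a) :
    A.mul ▷ M ≫ ent A a = (α_ _ _ _).hom ≫ A.X ◁ ent A a ≫ (α_ _ _ _).inv ≫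
      ent A a ▷ A.X ≫ (α_ _ _ _).hom ≫ M ◁ A.mul := by
  have lhs : A.mul ▷ M ≫ ent A a = 𝟙 _ ⊗≫ A.comul ▷ A.X ▷ M ⊗≫ (A.X ⊗ A.X) ◁ A.comul ▷ M ⊗≫
      A.X ◁ (β_ A.X A.X).hom ▷ A.X ▷ M ⊗≫ (A.X ⊗ A.X ⊗ A.X) ◁ (β_ A.X M).hom ⊗≫
      (A.X ⊗ A.X) ◁ (β_ A.X M).hom ▷ A.X ⊗≫ A.X ◁ a ▷ (A.X ⊗ A.X) ⊗≫ a ▷ (A.X ⊗ A.X) ⊗≫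
      M ◁ A.mul := by
    unfold ent
    calc _ = (A.mul ≫ A.comul) ▷ M ⊗≫ A.X ◁ (β_ A.X M).hom ⊗≫ a ▷ A.X := by monoidal
      _ = 𝟙 _ ⊗≫ A.comul ▷ A.X ▷ M ⊗≫ (A.X ⊗ A.X) ◁ A.comul ▷ M ⊗≫
          A.X ◁ (β_ A.X A.X).hom ▷ A.X ▷ M ⊗≫ A.mul ▷ (A.X ⊗ A.X) ▷ M ⊗≫
          A.X ◁ (A.mul ▷ M ≫ (β_ A.X M).hom) ⊗≫ a ▷ A.X := by
        rw [A.mul_comul, MonoidalCategory.tensorHom_def, MonoidalCategory.tensorHom_def]; monoidal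
      _ = 𝟙 _ ⊗≫ A.comul ▷ A.X ▷ M ⊗≫ (A.X ⊗ A.X) ◁ A.comul ▷ M ⊗≫
          A.X ◁ (β_ A.X A.X).hom ▷ A.X ▷ M ⊗≫ (A.mul ▷ ((A.X ⊗ A.X) ⊗ M) ≫
          A.X ◁ (β_ (A.X ⊗ A.X) M).hom) ⊗≫ ((A.X ⊗ M) ◁ A.mul ≫ a ▷ A.X) := by
        rw [BraidedCategory.braiding_naturality_left]; monoidal
      _ = 𝟙 _ ⊗≫ A.comul ▷ A.X ▷ M ⊗≫ (A.X ⊗ A.X) ◁ A.comul ▷ M ⊗≫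
          A.X ◁ (β_ A.X A.X).hom ▷ A.X ▷ M ⊗≫ (A.X ⊗ A.X) ◁ (β_ (A.X ⊗ A.X) M).hom ⊗≫
          (A.mul ▷ M ≫ a) ▷ (A.X ⊗ A.X) ⊗≫ M ◁ A.mul := by
        rw [whisker_exchange, ← whisker_exchange]; monoidal
      _ = _ := by
        rw [ha.assoc, BraidedCategory.braiding_tensor_left_hom]; monoidal
  rw [lhs]
  symm
  unfold ent
  calc _ = 𝟙 _ ⊗≫ A.X ◁ A.comul ▷ M ⊗≫ A.X ◁ A.X ◁ (β_ A.X M).hom ⊗≫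
        ((A.X ◁ (a ▷ A.X) ≫ A.comul ▷ (M ⊗ A.X))) ⊗≫
        A.X ◁ (β_ A.X M).hom ▷ A.X ⊗≫ a ▷ A.X ▷ A.X ⊗≫ M ◁ A.mul := by monoidal
    _ = 𝟙 _ ⊗≫ A.X ◁ A.comul ▷ M ⊗≫ (A.X ◁ (A.X ◁ (β_ A.X M).hom) ≫ A.comul ▷ (A.X ⊗ (M ⊗ A.X))) ⊗≫
        A.X ◁ (A.X ◁ a ≫ (β_ A.X M).hom) ▷ A.X ⊗≫ a ▷ A.X ▷ A.X ⊗≫ M ◁ A.mul := by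
      rw [whisker_exchange]; monoidal
    _ = 𝟙 _ ⊗≫ (A.X ◁ (A.comul ▷ M) ≫ A.comul ▷ ((A.X ⊗ A.X) ⊗ M)) ⊗≫
        ((A.X ⊗ A.X) ◁ (A.X ◁ (β_ A.X M).hom)) ⊗≫
        A.X ◁ ((β_ A.X (A.X ⊗ M)).hom ≫ a ▷ A.X) ▷ A.X ⊗≫ a ▷ A.X ▷ A.X ⊗≫ M ◁ A.mul := by
      rw [whisker_exchange, BraidedCategory.braiding_naturality_right]; monoidal
    _ = 𝟙 _ ⊗≫ A.comul ▷ (A.X ⊗ M) ⊗≫ (A.X ⊗ A.X) ◁ (A.comul ▷ M) ⊗≫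
        A.X ◁ ((A.X ⊗ A.X) ◁ (β_ A.X M).hom ≫ (β_ A.X A.X).hom ▷ (M ⊗ A.X)) ⊗≫
        A.X ◁ A.X ◁ (β_ A.X M).hom ▷ A.X ⊗≫
         A.X ◁ (a ▷ A.X) ▷ A.X ⊗≫ a ▷ A.X ▷ A.X ⊗≫ M ◁ A.mul := by
      rw [whisker_exchange, BraidedCategory.braiding_tensor_right_hom]; monoidal
    _ = _ := by
      rw [whisker_exchange]; monoidal

theorem ent_tensor {M N : C} (a : A.X ⊗ M ⟶ M) (b : A.X ⊗ N ⟶ N) :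
    ent A (tact A a b) = (α_ _ _ _).inv ≫ ent A a ▷ N ≫ (α_ _ _ _).hom ≫ M ◁ ent A b ≫
      (α_ _ _ _).inv := by
  symm
  calc _ = 𝟙 _ ⊗≫ (ent A a ≫ M ◁ A.comul) ▷ N ⊗≫ M ◁ A.X ◁ (β_ A.X N).hom ⊗≫ M ◁ b ▷ A.X ⊗≫ 𝟙 _ := by
        rw [ent.eq_def A b]; monoidal
    _ = 𝟙 _ ⊗≫ A.comul ▷ M ▷ N ⊗≫ A.X ◁ (β_ A.X M).hom ▷ N ⊗≫ (ent A a ▷ (A.X ⊗ N) ≫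
          (M ⊗ A.X) ◁ (β_ A.X N).hom) ⊗≫ M ◁ b ▷ A.X ⊗≫ 𝟙 _ := by
        rw [ent_comul]; monoidal
    _ = _ := by
      rw [← whisker_exchange, ent.eq_def A (tact A a b), tact,
        BraidedCategory.braiding_tensor_right_hom]; monoidal

theorem tact_isAct {M N : C} {a : A.X ⊗ M ⟶ M} {b : A.X ⊗ N ⟶ N} (ha : IsAct A a)
    (hb : IsAct A b) : IsAct A (tact A a b) where
  unit := by
    calc _ = 𝟙 _ ⊗≫ (A.one ▷ M ≫ ent A a) ▷ N ⊗≫ M ◁ b := by unfold tact; monoidal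
      _ = 𝟙 _ ⊗≫ M ◁ (A.one ▷ N ≫ b) := by rw [ent_unit A ha]; monoidal
      _ = _ := by rw [hb.unit]; monoidal
  assoc := by
    calc _ = 𝟙 _ ⊗≫ (A.mul ▷ M ≫ ent A a) ▷ N ⊗≫ M ◁ b := by unfold tact; monoidal
      _ = 𝟙 _ ⊗≫ A.X ◁ ent A a ▷ N ⊗≫ ent A a ▷ A.X ▷ N ⊗≫ M ◁ (A.mul ▷ N ≫ b) := by
        rw [ent_mul A ha]; monoidal
      _ = 𝟙 _ ⊗≫ A.X ◁ ent A a ▷ N ⊗≫ (ent A a ▷ (A.X ⊗ N) ≫ (M ⊗ A.X) ◁ b) ⊗≫ M ◁ b := by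
        rw [hb.assoc]; monoidal
      _ = _ := by
        rw [← whisker_exchange]; unfold tact; monoidal

theorem tact_assoc {M N P : C} (a : A.X ⊗ M ⟶ M) (b : A.X ⊗ N ⟶ N) (d : A.X ⊗ P ⟶ P) :
    tact A (tact A a b) d ≫ (α_ _ _ _).hom = A.X ◁ (α_ _ _ _).hom ≫ tact A a (tact A b d) := by
  rw [tact, ent_tensor, tact.eq_def A a, tact.eq_def A b]
  monoidal

theorem tact_map {M M' N : C} {a : A.X ⊗ M ⟶ M} {a' : A.X ⊗ M' ⟶ M'} (b : A.X ⊗ N ⟶ N)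
    (g : M ⟶ M') (hg : a ≫ g = A.X ◁ g ≫ a') :
    tact A a b ≫ g ▷ N = A.X ◁ (g ▷ N) ≫ tact A a' b := by
  have h : ent A a ≫ g ▷ A.X = A.X ◁ g ≫ ent A a' := by
    unfold ent
    calc _ = A.comul ▷ M ⊗≫ A.X ◁ (β_ A.X M).hom ⊗≫ (a ≫ g) ▷ A.X := by monoidal
      _ = A.comul ▷ M ⊗≫ A.X ◁ ((β_ A.X M).hom ≫ g ▷ A.X) ⊗≫ a' ▷ A.X := by
        rw [hg]; monoidal
      _ = 𝟙 _ ⊗≫ (A.comul ▷ M ≫ (A.X ⊗ A.X) ◁ g) ⊗≫ A.X ◁ ((β_ A.X M').hom) ⊗≫ a' ▷ A.X := by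
        rw [← BraidedCategory.braiding_naturality_right]; monoidal
      _ = _ := by rw [← whisker_exchange]; monoidal
  unfold tact
  calc _ = 𝟙 _ ⊗≫ ent A a ▷ N ⊗≫ (M ◁ b ≫ g ▷ N) := by monoidal
    _ = 𝟙 _ ⊗≫ (ent A a ≫ g ▷ A.X) ▷ N ⊗≫ M' ◁ b := by
      rw [whisker_exchange]; monoidal
    _ = _ := by rw [h]; monoidal

/-- `f (h x) = δ(h) f(x)` -/
def Coinv (δ : A.X ⟶ 𝟙_ C) {M Z : C} (a : A.X ⊗ M ⟶ M) (f : M ⟶ Z) : Prop :=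
  a ≫ f = δ ▷ M ≫ (λ_ M).hom ≫ f

/-- `f (h x ⊗ y) = f (x ⊗ S̃(h) y)` -/
def Bal (δ : A.X ⟶ 𝟙_ C) {M N Z : C} (a : A.X ⊗ M ⟶ M) (b : A.X ⊗ N ⟶ N) (f : M ⊗ N ⟶ Z) : Prop :=
  a ▷ N ≫ f = (β_ A.X M).hom ▷ N ≫ (α_ _ _ _).hom ≫ M ◁ (A.twist δ ▷ N ≫ b) ≫ f

theorem bal_of_coinv (δ : A.X ⟶ 𝟙_ C) {X Y Z : C} {a : A.X ⊗ X ⟶ X} {b : A.X ⊗ Y ⟶ Y}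
    (hb : IsAct A b) {f : X ⊗ Y ⟶ Z} (hf : Coinv A δ (tact A a b) f) : Bal A δ a b f := by
  unfold Bal
  unfold Coinv tact at hf
  calc _ = 𝟙 _ ⊗≫ (a ≫ (ρ_ X).inv) ▷ Y ⊗≫ X ◁ (λ_ Y).hom ⊗≫ f := by monoidal
    _ = 𝟙 _ ⊗≫ ent A a ▷ Y ⊗≫ X ◁ (A.counit ≫ A.one) ▷ Y ⊗≫ X ◁ b ⊗≫ f := by
      rw [← ent_counit, ← hb.unit]; monoidal
    _ = 𝟙 _ ⊗≫ (ent A a ≫ X ◁ A.comul) ▷ Y ⊗≫ X ◁ A.X ◁ A.antipode ▷ Y ⊗≫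
          X ◁ (A.mul ▷ Y ≫ b) ⊗≫ f := by
      rw [← A.antipode_right]; monoidal
    _ = 𝟙 _ ⊗≫ A.comul ▷ X ▷ Y ⊗≫ A.X ◁ (β_ A.X X).hom ▷ Y ⊗≫
        (ent A a ▷ (A.X ⊗ Y) ≫ (X ⊗ A.X) ◁ (A.antipode ▷ Y ≫ b)) ⊗≫ X ◁ b ⊗≫ f := by
      rw [ent_comul, hb.assoc]; monoidal
    _ = 𝟙 _ ⊗≫ A.comul ▷ X ▷ Y ⊗≫ A.X ◁ (β_ A.X X).hom ▷ Y ⊗≫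
        ((A.X ⊗ X) ◁ (A.antipode ▷ Y ≫ b)) ⊗≫ ((α_ _ _ _).inv ≫ ent A a ▷ Y ≫ (α_ _ _ _).hom ≫ X ◁ b) ≫ f := by
      rw [← whisker_exchange]; monoidal
    _ = 𝟙 _ ⊗≫ A.comul ▷ X ▷ Y ⊗≫ (A.X ◁ ((β_ A.X X).hom ▷ Y ≫ (α_ _ _ _).hom ≫
        (X ◁ (A.antipode ▷ Y ≫ b))) ≫ δ ▷ (X ⊗ Y)) ⊗≫ f := by
      rw [Category.assoc, Category.assoc, Category.assoc] at hf
      rw [Category.assoc, Category.assoc, Category.assoc, hf]; monoidal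
    _ = 𝟙 _ ⊗≫ ((A.comul ≫ δ ▷ A.X ≫ (λ_ A.X).hom) ▷ X ≫ (β_ A.X X).hom) ▷ Y ⊗≫
        (X ◁ (A.antipode ▷ Y ≫ b)) ⊗≫ f := by
      rw [whisker_exchange]; monoidal
    _ = _ := by
      rw [BraidedCategory.braiding_naturality_left, HopfObj.twist, MonoidalCategory.tensorHom_def]
      monoidal

theorem bal_rot (δ : A.X ⟶ 𝟙_ C) {X Y Z : C} {a : A.X ⊗ X ⟶ X} {b : A.X ⊗ Y ⟶ Y}
    {f : X ⊗ Y ⟶ Z} (hf : Bal A δ a b f) (L : Y ⟶ Y)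
    (hL : b ≫ L = A.X ◁ L ≫ (A.twist δ ≫ A.twist δ) ▷ Y ≫ b) :
    Bal A δ b a ((β_ Y X).hom ≫ X ◁ L ≫ f) := by
  unfold Bal at hf ⊢
  have hf' : X ◁ (A.twist δ ▷ Y ≫ b) ≫ f = (α_ _ _ _).inv ≫ (β_ X A.X).hom ▷ Y ≫ a ▷ Y ≫ f := by
    rw [hf, ← comp_whiskerRight_assoc, SymmetricCategory.symmetry]; simp
  calc _ = (b ▷ X ≫ (β_ Y X).hom) ⊗≫ X ◁ L ⊗≫ f := by monoidal
    _ = (β_ (A.X ⊗ Y) X).hom ⊗≫ X ◁ (b ≫ L) ⊗≫ f := by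
      rw [BraidedCategory.braiding_naturality_left]; monoidal
    _ = (β_ (A.X ⊗ Y) X).hom ⊗≫ X ◁ (A.X ◁ L ≫ A.twist δ ▷ Y) ⊗≫ (X ◁ (A.twist δ ▷ Y ≫ b) ≫ f) := by
      rw [hL]; monoidal
    _ = ((β_ (A.X ⊗ Y) X).hom ≫ X ◁ (A.X ◁ L ≫ A.twist δ ▷ Y)) ⊗≫
        (β_ X A.X).hom ▷ Y ⊗≫ a ▷ Y ⊗≫ f := by
      rw [hf']; monoidal
    _ = 𝟙 _ ⊗≫ (A.X ◁ L ≫ A.twist δ ▷ Y) ▷ X ⊗≫ A.X ◁ (β_ Y X).hom ⊗≫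
        ((β_ A.X X).hom ≫ (β_ X A.X).hom) ▷ Y ⊗≫ a ▷ Y ⊗≫ f := by
      rw [← BraidedCategory.braiding_naturality_left, BraidedCategory.braiding_tensor_left_hom]
      monoidal
    _ = 𝟙 _ ⊗≫ A.X ◁ L ▷ X ⊗≫ (A.twist δ ▷ (Y ⊗ X) ≫ A.X ◁ (β_ Y X).hom) ⊗≫
        a ▷ Y ⊗≫ f := by
      rw [SymmetricCategory.symmetry]; monoidal
    _ = 𝟙 _ ⊗≫ A.X ◁ (L ▷ X ≫ (β_ Y X).hom) ⊗≫ (A.twist δ ▷ X ≫ a) ▷ Y ⊗≫ f := by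
      rw [← whisker_exchange]; monoidal
    _ = 𝟙 _ ⊗≫ A.X ◁ (β_ Y X).hom ⊗≫ ((A.X ⊗ X) ◁ L ≫ (A.twist δ ▷ X ≫ a) ▷ Y) ⊗≫ f := by
      rw [BraidedCategory.braiding_naturality_left]; monoidal
    _ = 𝟙 _ ⊗≫ ((β_ A.X Y).hom ≫ (β_ Y A.X).hom) ▷ X ⊗≫ A.X ◁ (β_ Y X).hom ⊗≫
         (A.twist δ ▷ X ≫ a) ▷ Y ⊗≫ X ◁ L ⊗≫ f := by
      rw [whisker_exchange, SymmetricCategory.symmetry]; monoidal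
    _ = 𝟙 _ ⊗≫ (β_ A.X Y).hom ▷ X ⊗≫ ((β_ Y (A.X ⊗ X)).hom ≫
         (A.twist δ ▷ X ≫ a) ▷ Y) ⊗≫ X ◁ L ⊗≫ f := by
      rw [BraidedCategory.braiding_tensor_right_hom]; monoidal
    _ = _ := by
      rw [← BraidedCategory.braiding_naturality_right]; monoidal

theorem bal_reg (δ : A.X ⟶ 𝟙_ C) {M Z : C} {b : A.X ⊗ M ⟶ M}
    {f : A.X ⊗ M ⟶ Z} (hf : Bal A δ A.mul b f) :
    f = A.twist δ ▷ M ≫ b ≫ (λ_ M).inv ≫ A.one ▷ M ≫ f := by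
  unfold Bal at hf
  calc _ = ((ρ_ A.X).inv ≫ (ρ_ A.X).hom) ▷ M ≫ f := by simp
    _ = (ρ_ A.X).inv ▷ M ≫ (A.X ◁ A.one) ▷ M ≫ A.mul ▷ M ≫ f := by
      rw [← A.mul_one]; monoidal
    _ = 𝟙 _ ⊗≫ (A.X ◁ A.one ≫ (β_ A.X A.X).hom) ▷ M ⊗≫ A.X ◁ (A.twist δ ▷ M ≫ b) ≫ f := by
      rw [hf]; monoidal
    _ = 𝟙 _ ⊗≫ (A.one ▷ (A.X ⊗ M) ≫ A.X ◁ (A.twist δ ▷ M ≫ b)) ≫ f := by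
      rw [BraidedCategory.braiding_naturality_right, braiding_tensorUnit_right]; monoidal
    _ = _ := by
      rw [← whisker_exchange]; monoidal

theorem twist_left (δ : A.X ⟶ 𝟙_ C) : A.comul ≫ A.twist δ ▷ A.X ≫ A.mul = δ ≫ A.one := by
  unfold HopfObj.twist
  rw [MonoidalCategory.tensorHom_def]
  calc _ = 𝟙 _ ⊗≫ (A.comul ≫ A.comul ▷ A.X ≫ (α_ _ _ _).hom) ⊗≫ δ ▷ A.X ▷ A.X ⊗≫ A.antipode ▷ A.X ⊗≫ A.mul := by
        monoidal
    _ = 𝟙 _ ⊗≫ A.comul ⊗≫ (A.X ◁ A.comul ≫ δ ▷ (A.X ⊗ A.X)) ⊗≫ A.antipode ▷ A.X ⊗≫ A.mul := by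
      rw [A.comul_assoc]; monoidal
    _ = 𝟙 _ ⊗≫ A.comul ⊗≫ δ ▷ A.X ⊗≫ (A.comul ≫ A.antipode ▷ A.X ≫ A.mul) := by
      rw [whisker_exchange]; monoidal
    _ = 𝟙 _ ⊗≫ A.comul ⊗≫ (δ ▷ A.X ≫ 𝟙_ C ◁ A.counit) ⊗≫ A.one := by
      rw [A.antipode_left]; monoidal
    _ = 𝟙 _ ⊗≫ (A.comul ≫ A.X ◁ A.counit) ⊗≫ δ ▷ 𝟙_ C ⊗≫ A.one := by
      rw [← whisker_exchange]; monoidal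
    _ = _ := by
      rw [A.comul_counit]; monoidal

theorem ent_reg : ent A A.mul = A.X ◁ A.comul ≫ (α_ _ _ _).inv ≫ (A.mul ≫ A.comul) ▷ A.X ≫
    (α_ _ _ _).hom ≫ A.X ◁ A.X ◁ A.antipode ≫ A.X ◁ A.mul := by
  symm
  calc _ = 𝟙 _ ⊗≫ A.X ◁ (A.comul ≫ A.comul ▷ A.X ≫ (α_ _ _ _).hom) ⊗≫ ent A A.mul ▷ A.X ▷ A.X ⊗≫
      (A.X ◁ A.mul ▷ A.X ≫ A.X ◁ A.X ◁ A.antipode) ⊗≫ A.X ◁ A.mul := by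
        rw [mul_comul']; monoidal
    _ = 𝟙 _ ⊗≫ A.X ◁ (A.comul ≫ A.X ◁ A.comul) ⊗≫ ent A A.mul ▷ A.X ▷ A.X ⊗≫
      (A.X ◁ (A.mul ▷ A.X ≫ A.X ◁ A.antipode)) ⊗≫ A.X ◁ A.mul := by
        rw [A.comul_assoc]; monoidal
    _ = 𝟙 _ ⊗≫ A.X ◁ (A.comul ≫ A.X ◁ A.comul) ⊗≫ ent A A.mul ▷ A.X ▷ A.X ⊗≫
      A.X ◁ (A.X ⊗ A.X) ◁ A.antipode ⊗≫ A.X ◁ (A.mul ▷ A.X ≫ A.mul) := by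
        rw [← whisker_exchange]; monoidal
    _ = 𝟙 _ ⊗≫ A.X ◁ (A.comul ≫ A.X ◁ A.comul) ⊗≫ (ent A A.mul ▷ (A.X ⊗ A.X) ≫
      (A.X ⊗ A.X) ◁ (A.X ◁ A.antipode ≫ A.mul)) ⊗≫ A.X ◁ A.mul := by
        rw [A.mul_assoc]; monoidal
    _ = 𝟙 _ ⊗≫ A.X ◁ (A.comul ≫ A.X ◁ (A.comul ≫ A.X ◁ A.antipode ≫ A.mul)) ⊗≫ 
        ent A A.mul ▷ A.X ⊗≫ A.X ◁ A.mul := by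
        rw [← whisker_exchange]; monoidal
    _ = 𝟙 _ ⊗≫ A.X ◁ (A.comul ≫ A.X ◁ A.counit) ⊗≫ ((A.X ⊗ A.X) ◁ A.one ≫
        ent A A.mul ▷ A.X) ⊗≫ A.X ◁ A.mul := by
        rw [A.antipode_right]; monoidal
    _ = 𝟙 _ ⊗≫ ent A A.mul ⊗≫ A.X ◁ (A.X ◁ A.one ≫ A.mul) := by
        rw [whisker_exchange, A.comul_counit]; monoidal
    _ = _ := by
        rw [A.mul_one]; monoidal

theorem ent_twist (δ : A.X ⟶ 𝟙_ C) (hδ : A.IsCharacter δ) :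
    ent A A.mul ≫ A.twist δ ▷ A.X ≫ A.mul = δ ▷ A.X ≫ (λ_ _).hom ≫ A.twist δ := by
  rw [ent_reg]
  calc _ = 𝟙 _ ⊗≫ A.X ◁ A.comul ⊗≫ (A.mul ≫ A.comul) ▷ A.X ⊗≫ (A.X ◁ (A.X ◁ A.antipode ≫ A.mul) ≫
        A.twist δ ▷ A.X) ⊗≫ A.mul := by monoidal
    _ = 𝟙 _ ⊗≫ A.X ◁ A.comul ⊗≫ (A.mul ≫ A.comul) ▷ A.X ⊗≫ (A.twist δ ▷ (A.X ⊗ A.X) ⊗≫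
        (A.X ⊗ A.X) ◁ A.antipode) ⊗≫ (A.X ◁ A.mul ≫ A.mul) := by
        rw [whisker_exchange]; monoidal
    _ = 𝟙 _ ⊗≫ A.X ◁ A.comul ⊗≫ (A.mul ≫ A.comul) ▷ A.X ⊗≫ (A.twist δ ▷ A.X) ▷ A.X ⊗≫
        ((A.X ⊗ A.X) ◁ A.antipode ≫ A.mul ▷ A.X) ⊗≫ A.mul := by
        have := A.mul_assoc
        rw [← Iso.inv_comp_eq] at this
        rw [← this]; monoidal
    _ = 𝟙 _ ⊗≫ A.X ◁ A.comul ⊗≫ (A.mul ≫ (A.comul ≫ A.twist δ ▷ A.X ≫ A.mul)) ▷ A.X ⊗≫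
        A.X ◁ A.antipode ⊗≫ A.mul := by
        rw [whisker_exchange]; monoidal
    _ = 𝟙 _ ⊗≫ A.X ◁ A.comul ⊗≫ (A.mul ≫ δ) ▷ A.X ⊗≫ (A.one ▷ A.X ≫
        A.X ◁ A.antipode) ⊗≫ A.mul := by
        rw [twist_left]; monoidal
    _ = 𝟙 _ ⊗≫ (A.X ◁ A.comul ≫ δ ▷ (A.X ⊗ A.X)) ⊗≫ (δ ▷ A.X ≫ _ ◁ A.antipode) ⊗≫ (A.one ▷ A.X ≫ A.mul) := by
        rw [← whisker_exchange, hδ.1, MonoidalCategory.tensorHom_def]; monoidal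
    _ = _ := by
        rw [whisker_exchange, A.one_mul, HopfObj.twist, MonoidalCategory.tensorHom_def]
        monoidal

theorem coinv_twist (δ : A.X ⟶ 𝟙_ C) (hδ : A.IsCharacter δ) {M : C} {b : A.X ⊗ M ⟶ M}
    (hb : IsAct A b) : Coinv A δ (tact A A.mul b) (A.twist δ ▷ M ≫ b) := by
  unfold Coinv tact
  calc _ = 𝟙 _ ⊗≫ ent A A.mul ▷ M ⊗≫ (A.X ◁ b ≫ A.twist δ ▷ M) ≫ b := by monoidal
    _ = 𝟙 _ ⊗≫ ent A A.mul ▷ M ⊗≫ A.twist δ ▷ A.X ▷ M ⊗≫ ((α_ _ _ _).hom ≫ A.X ◁ b ≫ b) := by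
      rw [whisker_exchange]; monoidal
    _ = 𝟙 _ ⊗≫ (ent A A.mul ≫ A.twist δ ▷ A.X ≫ A.mul) ▷ M ≫ b := by
      rw [← hb.assoc]; monoidal
    _ = _ := by rw [ent_twist A δ hδ]; monoidal

/-- left multiplication by `σ` -/
def lact (σ : 𝟙_ C ⟶ A.X) {M : C} (a : A.X ⊗ M ⟶ M) : M ⟶ M := (λ_ M).inv ≫ σ ▷ M ≫ a

theorem sigma_antipode (σ : 𝟙_ C ⟶ A.X) (hσ : A.IsCocharacter σ) :
    (λ_ (𝟙_ C)).inv ≫ σ ▷ _ ≫ A.X ◁ (σ ≫ A.antipode) ≫ A.mul = A.one := by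
  have h := A.antipode_right
  calc _ = (σ ≫ A.comul) ≫ A.X ◁ A.antipode ≫ A.mul := by
        rw [hσ.1, MonoidalCategory.tensorHom_def]; monoidal
    _ = (σ ≫ A.counit) ≫ A.one := by rw [Category.assoc, h, Category.assoc]
    _ = _ := by rw [hσ.2, Category.id_comp]

theorem sigma_comm (δ : A.X ⟶ 𝟙_ C) (σ : 𝟙_ C ⟶ A.X) (hσ : A.IsCocharacter σ)
    (hbmpi : A.IsBMPI δ σ) :
    (λ_ A.X).inv ≫ σ ▷ A.X ≫ A.mul = (A.twist δ ≫ A.twist δ) ≫ (ρ_ A.X).inv ≫ A.X ◁ σ ≫ A.mul := by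
  have h := hbmpi.2
  unfold HopfObj.bmpiMap at h
  rw [MonoidalCategory.tensorHom_def] at h
  generalize A.twist δ ≫ A.twist δ = T at *
  have hm := A.mul_assoc
  rw [← Iso.inv_comp_eq] at hm
  calc _ = (λ_ A.X).inv ≫ σ ▷ A.X ≫ A.X ◁ (𝟙 A.X) ≫ A.mul := by simp
    _ = 𝟙 _ ⊗≫ (σ ▷ (𝟙_ C ⊗ A.X) ≫ A.X ◁ ((σ ≫ A.antipode) ▷ A.X)) ⊗≫ A.X ◁ A.X ◁ (T ≫ (ρ_ A.X).inv ≫ A.X ◁ σ) ⊗≫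
          A.X ◁ (A.mul ▷ A.X) ⊗≫ (A.X ◁ A.mul ≫ A.mul) := by
      conv_lhs => rw [← h]
      monoidal
    _ = 𝟙 _ ⊗≫ (σ ▷ (𝟙_ C ⊗ A.X) ≫ A.X ◁ ((σ ≫ A.antipode) ▷ A.X)) ⊗≫ A.X ◁ A.X ◁ (T ≫ (ρ_ A.X).inv ≫ A.X ◁ σ) ⊗≫
          (A.X ◁ A.mul ≫ A.mul) ▷ A.X ⊗≫ A.mul := by
      conv_lhs => rw [← hm]
      monoidal
    _ = 𝟙 _ ⊗≫ (σ ▷ (𝟙_ C) ≫ A.X ◁ (σ ≫ A.antipode)) ▷ A.X ⊗≫ ((A.X ⊗ A.X) ◁ (T ≫ (ρ_ A.X).inv ≫ A.X ◁ σ) ≫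
          A.mul ▷ (A.X ⊗ A.X)) ⊗≫ A.mul ▷ A.X ⊗≫ A.mul := by rw [← hm]; monoidal
    _ = 𝟙 _ ⊗≫ ((λ_ (𝟙_ C)).inv ≫ σ ▷ _ ≫ A.X ◁ (σ ≫ A.antipode) ≫ A.mul) ▷ A.X ⊗≫
          A.X ◁ (T ≫ (ρ_ A.X).inv ≫ A.X ◁ σ) ⊗≫ A.mul ▷ A.X ⊗≫ A.mul := by
      rw [whisker_exchange]; monoidal
    _ = 𝟙 _ ⊗≫ (A.one ▷ A.X ≫ A.X ◁ (T ≫ (ρ_ A.X).inv ≫ A.X ◁ σ)) ⊗≫ A.mul ▷ A.X ⊗≫ A.mul := by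
      rw [sigma_antipode A σ hσ]; monoidal
    _ = 𝟙 _ ⊗≫ (T ≫ (ρ_ A.X).inv ≫ A.X ◁ σ) ⊗≫ (A.one ▷ A.X ≫ A.mul) ▷ A.X ⊗≫ A.mul := by
      rw [← whisker_exchange]; monoidal
    _ = _ := by rw [A.one_mul]; monoidal

theorem lact_comm (δ : A.X ⟶ 𝟙_ C) (σ : 𝟙_ C ⟶ A.X) (hσ : A.IsCocharacter σ)
    (hbmpi : A.IsBMPI δ σ) :
    A.mul ≫ lact A σ A.mul = A.X ◁ lact A σ A.mul ≫ (A.twist δ ≫ A.twist δ) ▷ A.X ≫ A.mul := by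
  have h := sigma_comm A δ σ hσ hbmpi
  unfold lact
  generalize A.twist δ ≫ A.twist δ = T at *
  have hm := A.mul_assoc
  have hm' := A.mul_assoc
  rw [← Iso.inv_comp_eq] at hm'
  calc _ = 𝟙 _ ⊗≫ (𝟙_ C ◁ A.mul ≫ σ ▷ A.X) ≫ A.mul := by monoidal
    _ = 𝟙 _ ⊗≫ σ ▷ A.X ▷ A.X ⊗≫ (A.X ◁ A.mul ≫ A.mul) := by rw [whisker_exchange]; monoidal
    _ = 𝟙 _ ⊗≫ ((λ_ A.X).inv ≫ σ ▷ A.X ≫ A.mul) ▷ A.X ⊗≫ A.mul := by rw [← hm']; monoidal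
    _ = 𝟙 _ ⊗≫ T ▷ A.X ⊗≫ A.X ◁ σ ▷ A.X ⊗≫ (A.mul ▷ A.X ≫ A.mul) := by rw [h]; monoidal
    _ = (T ▷ A.X ≫ A.X ◁ ((λ_ A.X).inv ≫ σ ▷ A.X ≫ A.mul)) ≫ A.mul := by rw [hm]; monoidal
    _ = _ := by rw [← whisker_exchange]; monoidal

theorem lact_tact (σ : 𝟙_ C ⟶ A.X) (hσ : A.IsCocharacter σ) {M N : C} (a : A.X ⊗ M ⟶ M)
    (b : A.X ⊗ N ⟶ N) : lact A σ (tact A a b) = lact A σ a ▷ N ≫ M ◁ lact A σ b := by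
  unfold lact tact ent
  calc _ = 𝟙 _ ⊗≫ (σ ≫ A.comul) ▷ (M ⊗ N) ⊗≫ A.X ◁ (β_ A.X M).hom ▷ N ⊗≫ a ▷ A.X ▷ N ⊗≫ M ◁ b := by
        monoidal
    _ = 𝟙 _ ⊗≫ σ ▷ (M ⊗ N) ⊗≫ A.X ◁ (σ ▷ M ≫ (β_ A.X M).hom) ▷ N ⊗≫ a ▷ A.X ▷ N ⊗≫ M ◁ b := by
        rw [hσ.1, MonoidalCategory.tensorHom_def]; monoidal
    _ = 𝟙 _ ⊗≫ σ ▷ (M ⊗ N) ⊗≫ ((A.X ⊗ M) ◁ σ ≫ a ▷ A.X) ▷ N ⊗≫ M ◁ b := by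
        rw [BraidedCategory.braiding_naturality_left, braiding_tensorUnit_left]; monoidal
    _ = _ := by rw [whisker_exchange]; monoidal

/-- iterated diagonal action -/
def act : ∀ n : ℕ, A.X ⊗ tensorPow A.X (n + 1) ⟶ tensorPow A.X (n + 1)
  | 0 => A.mul
  | n + 1 => tact A (act n) A.mul

theorem mul_isAct : IsAct A A.mul := ⟨A.mul_assoc, A.one_mul⟩

theorem act_isAct : ∀ n, IsAct A (act A n)
  | 0 => mul_isAct A
  | n + 1 => tact_isAct A (act_isAct n) (mul_isAct A)

theorem iterComul_succ : ∀ n, A.iterComul (n + 1) = A.comul ≫ A.iterComul n ▷ A.X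
  | 0 => by
    change A.comul ≫ A.X ◁ 𝟙 A.X ≫ 𝟙 _ = A.comul ≫ 𝟙 A.X ▷ A.X
    simp
  | n + 1 => by
    have ih := iterComul_succ n
    have gen : ∀ {P Q : C} (g : A.X ⟶ P) (c : A.X ⊗ P ⟶ Q),
        A.comul ≫ A.X ◁ (A.comul ≫ g ▷ A.X) ≫ (α_ _ _ _).inv ≫ c ▷ A.X =
        A.comul ≫ (A.comul ≫ A.X ◁ g ≫ c) ▷ A.X := by
      intro P Q g c
      calc _ = (A.comul ≫ A.X ◁ A.comul) ⊗≫ (A.X ◁ g ≫ c) ▷ A.X := by monoidal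
        _ = _ := by rw [← A.comul_assoc]; monoidal
    have := gen (A.iterComul n) (tensorPowCons A.X (n + 1)).hom
    rw [← ih] at this
    exact this

theorem act_eq : ∀ n, act A n = A.iterComul n ▷ _ ≫ A.iterMul n
  | 0 => by
    change A.mul = 𝟙 A.X ▷ A.X ≫ A.mul
    simp
  | n + 1 => by
    have ih := act_eq n
    have gen : ∀ {P : C} (g : A.X ⟶ P) (m : P ⊗ P ⟶ P),
        tact A (g ▷ P ≫ m) A.mul = (A.comul ≫ g ▷ A.X) ▷ (P ⊗ A.X) ≫
          (α_ P A.X (P ⊗ A.X)).hom ≫ (P ◁ (α_ A.X P A.X).inv) ≫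
          (P ◁ ((β_ A.X P).hom ▷ A.X)) ≫ (P ◁ (α_ P A.X A.X).hom) ≫
          (α_ P P (A.X ⊗ A.X)).inv ≫ (m ⊗ₘ A.mul) := by
      intro P g m
      unfold tact ent
      calc _ = 𝟙 _ ⊗≫ A.comul ▷ (P ⊗ A.X) ⊗≫ (A.X ◁ (β_ A.X P).hom ≫ g ▷ (P ⊗ A.X)) ▷ A.X ⊗≫
            m ▷ (A.X ⊗ A.X) ⊗≫ P ◁ A.mul := by monoidal
        _ = _ := by rw [whisker_exchange, MonoidalCategory.tensorHom_def]; monoidal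
    have := gen (A.iterComul n) (A.iterMul n)
    rw [← ih, ← iterComul_succ] at this
    exact this

theorem cons_act : ∀ n, tact A A.mul (act A n) ≫ (tensorPowCons A.X (n + 1)).hom =
    A.X ◁ (tensorPowCons A.X (n + 1)).hom ≫ act A (n + 1)
  | 0 => by
    change tact A A.mul A.mul ≫ 𝟙 _ = A.X ◁ 𝟙 _ ≫ tact A A.mul A.mul
    simp
  | n + 1 => by
    have ih := cons_act n
    change tact A A.mul (tact A (act A n) A.mul) ≫ ((α_ _ _ _).inv ≫ (tensorPowCons A.X (n + 1)).hom ▷ A.X) =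
      A.X ◁ ((α_ _ _ _).inv ≫ (tensorPowCons A.X (n + 1)).hom ▷ A.X) ≫ tact A (act A (n + 1)) A.mul
    have h1 := tact_map A A.mul _ ih
    have h2 := tact_assoc A A.mul (act A n) A.mul
    rw [MonoidalCategory.whiskerLeft_comp, Category.assoc, ← h1, ← cancel_epi (A.X ◁ (α_ _ _ _).hom),
      ← reassoc_of% h2]
    simp

theorem lact_succ (σ : 𝟙_ C ⟶ A.X) (hσ : A.IsCocharacter σ) (n : ℕ) :
    lact A σ (act A (n + 1)) = lact A σ (act A n) ▷ A.X ≫ tensorPow A.X (n + 1) ◁ lact A σ A.mul :=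
  lact_tact A σ hσ _ _

theorem one_twist (δ : A.X ⟶ 𝟙_ C) (hδ : A.IsCharacter δ) : A.one ≫ A.twist δ = A.one := by
  calc _ = 𝟙 _ ⊗≫ (A.one ≫ A.twist δ) ▷ 𝟙_ C ⊗≫ (ρ_ A.X).hom := by monoidal
    _ = (λ_ (𝟙_ C)).inv ≫ A.one ▷ 𝟙_ C ≫ (A.twist δ ▷ 𝟙_ C ≫ A.X ◁ A.one) ≫ A.mul := by
      rw [← A.mul_one]; monoidal
    _ = (A.one ≫ A.comul) ≫ A.twist δ ▷ A.X ≫ A.mul := by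
      rw [← whisker_exchange, A.one_comul, MonoidalCategory.tensorHom_def]; monoidal
    _ = _ := by
      rw [Category.assoc, twist_left, ← Category.assoc, hδ.2, Category.id_comp]

section rot
variable {X : C}

/-- cast between tensor powers -/
def pc (X : C) {a b : ℕ} (h : a = b) : tensorPow X a ⟶ tensorPow X b := eqToHom (by rw [h])

/-- rotation followed by `f` on the last factor -/
def rot (f : X ⟶ X) (n : ℕ) : tensorPow X (n + 2) ⟶ tensorPow X (n + 2) :=
  (tensorPowCons X (n + 1)).inv ≫ (β_ X (tensorPow X (n + 1))).hom ≫ tensorPow X (n + 1) ◁ f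

theorem cons_rot (f : X ⟶ X) (n : ℕ) : (tensorPowCons X (n + 1)).hom ≫ rot f n =
    (β_ X (tensorPow X (n + 1))).hom ≫ tensorPow X (n + 1) ◁ f := by
  unfold rot
  exact Iso.hom_inv_id_assoc _ _

theorem cons_rot_comp (f : X ⟶ X) (n : ℕ) {Z : C} (h : tensorPow X (n + 1) ⊗ X ⟶ Z) :
    (tensorPowCons X (n + 1)).hom ≫ (show tensorPow X (n + 2) ⟶ Z from rot f n ≫ h) =
    (β_ X (tensorPow X (n + 1))).hom ≫ tensorPow X (n + 1) ◁ f ≫ h :=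
  (Category.assoc _ _ _).symm.trans ((congrArg (fun t : X ⊗ tensorPow X (n + 1) ⟶ tensorPow X (n + 1) ⊗ X => t ≫ h) (cons_rot f n)).trans (Category.assoc _ _ _))

/-- joining -/
def J (X : C) (k : ℕ) : ∀ m : ℕ, tensorPow X (k + 1) ⊗ tensorPow X (m + 1) ⟶ tensorPow X (k + m + 2)
  | 0 => 𝟙 _
  | m + 1 => (α_ (tensorPow X (k + 1)) (tensorPow X (m + 1)) X).inv ≫ J X k m ▷ X

theorem pc_rfl {a : ℕ} (h : a = a) : pc X h = 𝟙 _ := rfl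

theorem pc_trans {a b c : ℕ} (h : a = b) (h' : b = c) : pc X h ≫ pc X h' = pc X (h.trans h') := by
  subst h; subst h'; simp [pc_rfl]

theorem pc_whisker {a b : ℕ} (h : a + 1 = b + 1) (h' : a + 2 = b + 2) : pc X h ▷ X = pc X h' := by
  obtain rfl : a = b := by omega
  rw [pc_rfl, pc_rfl]; exact id_whiskerRight _ _

theorem pc_pow (f : X ⟶ X) {a b : ℕ} (h : a + 2 = b + 2) (k : ℕ) :
    pc X h ≫ endoPow (rot f b) k = endoPow (rot f a) k ≫ pc X h := by
  obtain rfl : a = b := by omega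
  simp [pc_rfl]

theorem pc_rot (f : X ⟶ X) {a b : ℕ} (h : a + 2 = b + 2) :
    pc X h ≫ rot f b = rot f a ≫ pc X h := by
  obtain rfl : a = b := by omega
  simp [pc_rfl]

theorem endoPow_succ' {Y : C} (f : Y ⟶ Y) : ∀ n, endoPow f (n + 1) = endoPow f n ≫ f
  | 0 => by simp [endoPow]
  | n + 1 => by
    have ih := endoPow_succ' f n
    change f ≫ endoPow f (n + 1) = (f ≫ endoPow f n) ≫ f
    rw [ih, Category.assoc]

theorem J_zero : ∀ m : ℕ, J X 0 m = (tensorPowCons X (m + 1)).hom ≫ pc X (by omega : m + 2 = 0 + m + 2)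
  | 0 => by
    change 𝟙 _ = 𝟙 _ ≫ 𝟙 _
    simp
  | m + 1 => by
    have ih := J_zero m
    have hw := pc_whisker (X := X) (a := m + 1) (b := 0 + m + 1) (by omega) (by omega)
    refine (congrArg (fun t => (α_ X (tensorPow X (m + 1)) X).inv ≫ t ▷ X) ih).trans ?_
    refine Eq.trans ?_ (congrArg (fun t : tensorPow X (m + 2) ⊗ X ⟶ tensorPow X (0 + m + 2) ⊗ X =>
      ((α_ X (tensorPow X (m + 1)) X).inv ≫ (tensorPowCons X (m + 1)).hom ▷ X) ≫ t) hw)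
    simp only [comp_whiskerRight, Category.assoc]

theorem J_A (k : ℕ) : ∀ m : ℕ, J X (k + 1) m ≫ pc X (by omega : k + 1 + m + 2 = k + (m + 1) + 2) =
    (α_ (tensorPow X (k + 1)) X (tensorPow X (m + 1))).hom ≫
      tensorPow X (k + 1) ◁ (tensorPowCons X (m + 1)).hom ≫ J X k (m + 1)
  | 0 => by
    change 𝟙 _ ≫ 𝟙 _ = (α_ (tensorPow X (k + 1)) X X).hom ≫ tensorPow X (k + 1) ◁ 𝟙 _ ≫
      (α_ (tensorPow X (k + 1)) X X).inv ≫ 𝟙 (tensorPow X (k + 1) ⊗ X) ▷ X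
    simp
  | m + 1 => by
    have ih := J_A k m
    rw [← pc_whisker (a := k + 1 + m + 1) (b := k + (m + 1) + 1) (by omega)]
    change ((α_ _ _ _).inv ≫ J X (k + 1) m ▷ X) ≫ pc X _ ▷ X =
      (α_ (tensorPow X (k + 1)) X (tensorPow X (m + 1) ⊗ X)).hom ≫
      tensorPow X (k + 1) ◁ ((α_ _ _ _).inv ≫ (tensorPowCons X (m + 1)).hom ▷ X) ≫
      (α_ (tensorPow X (k + 1)) (tensorPow X (m + 2)) X).inv ≫ J X k (m + 1) ▷ X
    rw [Category.assoc, ← comp_whiskerRight]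
    erw [ih]
    generalize J X k (m + 1) = j
    generalize (tensorPowCons X (m + 1)).hom = c
    revert j c
    generalize tensorPow X (m + 2) = Q
    generalize tensorPow X (k + (m + 1) + 2) = R
    intro j c
    change (α_ (tensorPow X (k + 1) ⊗ X) _ _).inv ≫ _ = _
    monoidal

theorem J_B (m : ℕ) : ∀ k : ℕ, (tensorPowCons X (m + 1)).hom ▷ tensorPow X (k + 1) ≫ J X (m + 1) k ≫
      pc X (by omega : m + 1 + k + 2 = m + k + 1 + 2) =
    (α_ X (tensorPow X (m + 1)) (tensorPow X (k + 1))).hom ≫ X ◁ J X m k ≫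
      (tensorPowCons X (m + k + 2)).hom
  | 0 => by
    change (tensorPowCons X (m + 1)).hom ▷ X ≫ 𝟙 _ ≫ 𝟙 _ = (α_ X (tensorPow X (m + 1)) X).hom ≫
      X ◁ 𝟙 (tensorPow X (m + 1) ⊗ X) ≫ (α_ X (tensorPow X (m + 1)) X).inv ≫ (tensorPowCons X (m + 1)).hom ▷ X
    simp
  | k + 1 => by
    have ih := J_B m k
    rw [← pc_whisker (a := m + 1 + k + 1) (b := m + k + 2) (by omega)]
    change (tensorPowCons X (m + 1)).hom ▷ (tensorPow X (k + 1) ⊗ X) ≫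
      ((α_ _ _ _).inv ≫ J X (m + 1) k ▷ X) ≫ pc X _ ▷ X =
      (α_ X (tensorPow X (m + 1)) (tensorPow X (k + 1) ⊗ X)).hom ≫
      X ◁ ((α_ _ _ _).inv ≫ J X m k ▷ X) ≫
      (α_ X (tensorPow X (m + k + 2)) X).inv ≫ (tensorPowCons X (m + k + 2)).hom ▷ X
    rw [Category.assoc, ← comp_whiskerRight]
    calc _ = 𝟙 _ ⊗≫ ((tensorPowCons X (m + 1)).hom ▷ tensorPow X (k + 1) ≫ J X (m + 1) k ≫
        pc X (by omega : m + 1 + k + 2 = m + k + 1 + 2)) ▷ X := by monoidal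
      _ = _ := by rw [ih]; monoidal

theorem perm_aux (A B X : C) : (α_ A X B).hom ≫ (β_ A (X ⊗ B)).hom ≫ (α_ X B A).hom ≫
    (β_ X (B ⊗ A)).hom = (β_ (A ⊗ X) B).hom ≫ (α_ B A X).inv := by
  calc _ = 𝟙 _ ⊗≫ (β_ A X).hom ▷ B ⊗≫ (X ◁ (β_ A B).hom ≫ (β_ X (B ⊗ A)).hom) := by
        rw [BraidedCategory.braiding_tensor_right_hom A]; monoidal
    _ = 𝟙 _ ⊗≫ ((β_ A X).hom ≫ (β_ X A).hom) ▷ B ⊗≫ A ◁ (β_ X B).hom ⊗≫ (β_ A B).hom ▷ X := by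
        rw [BraidedCategory.braiding_naturality_right, BraidedCategory.braiding_tensor_right_hom X]; monoidal
    _ = _ := by
        rw [SymmetricCategory.symmetry, BraidedCategory.braiding_tensor_left_hom]; monoidal

theorem step_aux {A B B' Q : C} (c : X ⊗ B ⟶ B') (g : A ⟶ A) (f : X ⟶ X) (j : B ⊗ A ⟶ Q)
    {R : C} (r : B' ⊗ A ⟶ R) (r' : Q ⊗ X ⟶ R)
    (h : c ▷ A ≫ r = (α_ _ _ _).hom ≫ X ◁ j ≫ (β_ X Q).hom ≫ Q ◁ f ≫ r') :
    (α_ A X B).hom ≫ A ◁ c ≫ (β_ A B').hom ≫ B' ◁ g ≫ r =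
      (β_ (A ⊗ X) B).hom ≫ B ◁ (g ▷ X ≫ A ◁ f) ≫ (α_ _ _ _).inv ≫ j ▷ X ≫ r' := by
  rw [BraidedCategory.braiding_naturality_right_assoc, ← whisker_exchange_assoc, h]
  calc _ = (α_ A X B).hom ≫ (A ◁ 𝟙 (X ⊗ B) ≫ (β_ A (X ⊗ B)).hom ≫ (X ⊗ B) ◁ g) ≫ (α_ _ _ _).hom ≫
        (X ◁ j ≫ (β_ X Q).hom) ≫ Q ◁ f ≫ r' := by simp
    _ = (α_ A X B).hom ≫ (β_ A (X ⊗ B)).hom ≫ (α_ _ _ _).hom ≫ (X ◁ (B ◁ g) ≫ (β_ X (B ⊗ A)).hom) ≫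
        (j ▷ X ≫ Q ◁ f) ≫ r' := by
      rw [BraidedCategory.braiding_naturality_right]; simp
    _ = ((α_ A X B).hom ≫ (β_ A (X ⊗ B)).hom ≫ (α_ _ _ _).hom ≫ (β_ X (B ⊗ A)).hom) ≫ (B ◁ g) ▷ X ≫
        (B ⊗ A) ◁ f ≫ j ▷ X ≫ r' := by
      rw [BraidedCategory.braiding_naturality_right, ← whisker_exchange]; simp
    _ = _ := by rw [perm_aux]; monoidal

theorem step_aux2 {A B B' Q R S T U : C} (c : X ⊗ B ⟶ B') (g : A ⟶ A) (f : X ⟶ X) (j : B ⊗ A ⟶ Q)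
    (J1 : (A ⊗ X) ⊗ B ⟶ S) (p : S ⟶ T) (J2 : A ⊗ B' ⟶ T) (E : T ⟶ T) (JB : B' ⊗ A ⟶ U) (q : U ⟶ T)
    (r : T ⟶ R) (r' : Q ⊗ X ⟶ R)
    (hA : J1 ≫ p = (α_ A X B).hom ≫ A ◁ c ≫ J2)
    (ih : J2 ≫ E = (β_ A B').hom ≫ B' ◁ g ≫ JB ≫ q)
    (h : c ▷ A ≫ JB ≫ q ≫ r = (α_ _ _ _).hom ≫ X ◁ j ≫ (β_ X Q).hom ≫ Q ◁ f ≫ r') :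
    J1 ≫ p ≫ E ≫ r =
      (β_ (A ⊗ X) B).hom ≫ B ◁ (g ▷ X ≫ A ◁ f) ≫ (α_ _ _ _).inv ≫ j ▷ X ≫ r' := by
  rw [reassoc_of% hA, reassoc_of% ih]
  exact step_aux c g f j (JB ≫ q ≫ r) r' h

theorem rot_block (f : X ⟶ X) (g : ∀ n : ℕ, tensorPow X (n + 1) ⟶ tensorPow X (n + 1)) (h0 : g 0 = f)
    (hs : ∀ n, g (n + 1) = g n ▷ X ≫ tensorPow X (n + 1) ◁ f) : ∀ k m : ℕ,
    J X k m ≫ endoPow (rot f (k + m)) (k + 1) = (β_ (tensorPow X (k + 1)) (tensorPow X (m + 1))).hom ≫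
      tensorPow X (m + 1) ◁ g k ≫ J X m k ≫ pc X (by omega : m + k + 2 = k + m + 2)
  | 0, m => by
    have e : endoPow (rot f (0 + m)) (0 + 1) = rot f (0 + m) := Category.comp_id _
    have h1 : ((tensorPowCons X (m + 1)).hom ≫ pc X (by omega : m + 2 = 0 + m + 2)) ≫ rot f (0 + m) =
        (β_ X (tensorPow X (m + 1))).hom ≫ tensorPow X (m + 1) ◁ f ≫ 𝟙 _ ≫
          pc X (by omega : m + 2 = 0 + m + 2) := by
      rw [Category.assoc, pc_rot f (a := m) (b := 0 + m)]
      refine (cons_rot_comp f m _).trans ?_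
      congr 2
      exact (Category.id_comp _).symm
    rw [e, h0]
    exact (congrArg (· ≫ rot f (0 + m)) (J_zero m)).trans h1
  | k + 1, m => by
    have ih := rot_block f g h0 hs k (m + 1)
    have hA := J_A (X := X) k m
    have hB := J_B (X := X) m k
    have hp := pc_pow f (a := k + 1 + m) (b := k + (m + 1)) (by omega) (k + 2)
    have hx : ∀ {Z : C} (u v : Z ⟶ tensorPow X (k + 1 + m + 2)),
        u ≫ pc X (by omega : k + 1 + m + 2 = k + (m + 1) + 2) = v ≫ pc X (by omega) → u = v := by
      intro Z u v h
      have := congrArg (· ≫ pc X (by omega : k + (m + 1) + 2 = k + 1 + m + 2)) h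
      simpa [pc_trans, pc_rfl] using this
    have h3 : (tensorPowCons X (m + 1)).hom ▷ tensorPow X (k + 1) ≫ J X (m + 1) k ≫
        pc X (by omega : m + 1 + k + 2 = k + (m + 1) + 2) ≫ rot f (k + (m + 1)) =
        (α_ X (tensorPow X (m + 1)) (tensorPow X (k + 1))).hom ≫ X ◁ J X m k ≫
        (β_ X (tensorPow X (m + k + 2))).hom ≫ tensorPow X (m + k + 2) ◁ f ≫
        pc X (by omega : m + k + 1 + 2 = k + (m + 1) + 2) := by
      rw [← pc_trans (by omega : m + 1 + k + 2 = m + k + 1 + 2) (by omega), Category.assoc,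
        pc_rot f (a := m + k + 1) (b := k + (m + 1)), reassoc_of% hB]
      exact congrArg (fun t => (α_ X (tensorPow X (m + 1)) (tensorPow X (k + 1))).hom ≫ X ◁ J X m k ≫ t)
        (cons_rot_comp f (m + k + 1) _)
    have h4 := step_aux2 (tensorPowCons X (m + 1)).hom (g k) f (J X m k) _ _ _ _ _ _ _ _ hA ih h3
    apply hx
    rw [endoPow_succ'] at hp
    rw [Category.assoc, ← hp]
    refine h4.trans ?_
    rw [hs]
    simp only [Category.assoc, pc_trans]
    exact congrArg (fun t => (β_ (tensorPow X (k + 1) ⊗ X) (tensorPow X (m + 1))).hom ≫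
      tensorPow X (m + 1) ◁ (g k ▷ X ≫ tensorPow X (k + 1) ◁ f) ≫ t) (Category.assoc _ _ _).symm

theorem rot_pow (f : X ⟶ X) (g : ∀ n : ℕ, tensorPow X (n + 1) ⟶ tensorPow X (n + 1)) (h0 : g 0 = f)
    (hs : ∀ n, g (n + 1) = g n ▷ X ≫ tensorPow X (n + 1) ◁ f) (n : ℕ) :
    endoPow (rot f n) (n + 2) = g (n + 1) := by
  have h : endoPow (rot f n) (n + 1) = (β_ (tensorPow X (n + 1)) X).hom ≫ X ◁ g n ≫
      (tensorPowCons X (n + 1)).hom := by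
    have hJ : J X 0 n ≫ pc X (by omega : 0 + n + 2 = n + 0 + 2) = (tensorPowCons X (n + 1)).hom :=
      (congrArg (fun t : X ⊗ tensorPow X (n + 1) ⟶ tensorPow X (0 + n + 2) =>
        t ≫ pc X (by omega : 0 + n + 2 = n + 0 + 2)) (J_zero n)).trans
        ((Category.assoc _ _ _).trans ((congrArg (fun t => (tensorPowCons X (n + 1)).hom ≫ t)
          (pc_trans _ _)).trans (Category.comp_id _)))
    exact (Category.id_comp _).symm.trans ((rot_block f g h0 hs n 0).trans
      (congrArg (fun t => (β_ (tensorPow X (n + 1)) X).hom ≫ X ◁ g n ≫ t) hJ))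
  have aux : ∀ {P Q : C} (u : P ⟶ P) (c : X ⊗ P ⟶ Q) (r : Q ⟶ P ⊗ X)
      (_ : c ≫ r = (β_ X P).hom ≫ P ◁ f),
      ((β_ P X).hom ≫ X ◁ u ≫ c) ≫ r = u ▷ X ≫ P ◁ f := by
    intro P Q u c r hc
    rw [Category.assoc, Category.assoc, hc, BraidedCategory.braiding_naturality_right_assoc,
      SymmetricCategory.symmetry_assoc]
  rw [endoPow_succ', h, hs]
  exact aux (g n) _ _ (cons_rot f n)

end rot

theorem snoc_cons (X : C) (σ : 𝟙_ C ⟶ X) : ∀ n, tensorPowSnoc X σ (n + 1) ≫ (tensorPowCons X (n + 1)).inv =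
    (tensorPowCons X n).inv ≫ X ◁ tensorPowSnoc X σ n
  | 0 => by
    change ((ρ_ X).inv ≫ X ◁ σ) ≫ 𝟙 _ = (ρ_ X).inv ≫ X ◁ σ
    simp
  | n + 1 => by
    rw [Iso.comp_inv_eq, Category.assoc, Iso.eq_inv_comp]
    change (tensorPowCons X (n + 1)).hom ≫ (ρ_ (tensorPow X (n + 2))).inv ≫ tensorPow X (n + 2) ◁ σ =
      X ◁ ((ρ_ (tensorPow X (n + 1))).inv ≫ tensorPow X (n + 1) ◁ σ) ≫ (α_ X (tensorPow X (n + 1)) X).inv ≫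
        (tensorPowCons X (n + 1)).hom ▷ X
    calc _ = 𝟙 _ ⊗≫ ((tensorPowCons X (n + 1)).hom ▷ 𝟙_ C ≫ tensorPow X (n + 2) ◁ σ) := by monoidal
      _ = _ := by rw [← whisker_exchange]; monoidal

/-- the projection -/
def proj (δ : A.X ⟶ 𝟙_ C) (n : ℕ) : tensorPow A.X (n + 2) ⟶ tensorPow A.X (n + 1) :=
  (tensorPowCons A.X (n + 1)).inv ≫ A.twist δ ▷ _ ≫ act A n

/-- the section -/
def sect (n : ℕ) : tensorPow A.X (n + 1) ⟶ tensorPow A.X (n + 2) :=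
  (λ_ _).inv ≫ A.one ▷ _ ≫ (tensorPowCons A.X (n + 1)).hom

theorem sect_proj (δ : A.X ⟶ 𝟙_ C) (hδ : A.IsCharacter δ) (n : ℕ) : sect A n ≫ proj A δ n = 𝟙 _ := by
  unfold sect proj
  simp only [Category.assoc, Iso.hom_inv_id_assoc]
  rw [← comp_whiskerRight_assoc, one_twist A δ hδ, (act_isAct A n).unit, Iso.inv_hom_id]

theorem proj_coinv (δ : A.X ⟶ 𝟙_ C) (hδ : A.IsCharacter δ) (n : ℕ) :
    Coinv A δ (act A (n + 1)) (proj A δ n) := by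
  have h := coinv_twist A δ hδ (act_isAct A n)
  have hc := cons_act A n
  unfold Coinv proj at *
  rw [← cancel_epi (A.X ◁ (tensorPowCons A.X (n + 1)).hom), ← reassoc_of% hc, Iso.hom_inv_id_assoc, h,
    whisker_exchange_assoc, leftUnitor_naturality_assoc, Iso.hom_inv_id_assoc]

theorem sect_rot (δ : A.X ⟶ 𝟙_ C) (σ : 𝟙_ C ⟶ A.X) (n : ℕ) :
    sect A n ≫ rot (lact A σ A.mul) n = tensorPowSnoc A.X σ (n + 1) := by
  have : A.one ≫ lact A σ A.mul = σ := by
    unfold lact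
    calc _ = (λ_ (𝟙_ C)).inv ≫ (𝟙_ C ◁ A.one ≫ σ ▷ A.X) ≫ A.mul := by monoidal
      _ = 𝟙 _ ⊗≫ σ ▷ 𝟙_ C ⊗≫ (A.X ◁ A.one ≫ A.mul) := by rw [whisker_exchange]; monoidal
      _ = _ := by rw [A.mul_one]; monoidal
  have aux : ∀ {P Q R : C} (c : A.X ⊗ P ⟶ Q) (r : Q ⟶ P ⊗ A.X)
      (_ : c ≫ r = (β_ A.X P).hom ≫ P ◁ lact A σ A.mul),
      ((λ_ P).inv ≫ A.one ▷ P ≫ c) ≫ r = (ρ_ P).inv ≫ P ◁ σ := by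
    intro P Q R c r hc
    rw [Category.assoc, Category.assoc, hc, BraidedCategory.braiding_naturality_left_assoc,
      braiding_tensorUnit_left, ← MonoidalCategory.whiskerLeft_comp, this]
    simp
  exact aux (R := 𝟙_ C) _ _ (cons_rot _ n)

theorem snoc_proj (δ : A.X ⟶ 𝟙_ C) (σ : 𝟙_ C ⟶ A.X) (n : ℕ) :
    tensorPowSnoc A.X σ (n + 1) ≫ proj A δ n = A.cyclicOp δ σ n := by
  unfold proj HopfObj.cyclicOp
  rw [← Category.assoc, snoc_cons, act_eq, MonoidalCategory.tensorHom_def']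
  simp

theorem rot_proj (δ : A.X ⟶ 𝟙_ C) (σ : 𝟙_ C ⟶ A.X)
    (hδ : A.IsCharacter δ) (hσ : A.IsCocharacter σ) (hbmpi : A.IsBMPI δ σ) (n : ℕ) :
    rot (lact A σ A.mul) n ≫ proj A δ n = proj A δ n ≫ A.cyclicOp δ σ n := by
  have h1 : Bal A δ (act A n) A.mul (proj A δ n) := bal_of_coinv A δ (mul_isAct A) (proj_coinv A δ hδ n)
  have h2 := bal_reg A δ (bal_rot A δ h1 _ (lact_comm A δ σ hσ hbmpi))
  rw [← snoc_proj, ← sect_rot A δ, ← cancel_epi (tensorPowCons A.X (n + 1)).hom]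
  have h3 : (tensorPowCons A.X (n + 1)).hom ≫ rot (lact A σ A.mul) n ≫ proj A δ n =
      (β_ A.X (tensorPow A.X (n + 1))).hom ≫ tensorPow A.X (n + 1) ◁ lact A σ A.mul ≫ proj A δ n :=
    cons_rot_comp _ _ _
  refine h3.trans (h2.trans ?_)
  erw [← h3]
  unfold sect
  rw [proj.eq_def]
  simp only [Category.assoc, Iso.hom_inv_id_assoc]

end CycAux

/-- For a Hopf monoid in a symmetric monoidal category and a braided
modular pair in involution `(δ, σ)`, for every `n ≥ 1` the `(n+1)`-fold composite of
`τ_n` is the identity (here stated for `τ_{n+1}`, for all `n : ℕ`). -/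
theorem HopfObj.cyclicOp_pow_eq_id (A : _root_.HopfObj C)
    (δ : A.X ⟶ 𝟙_ C) (σ : 𝟙_ C ⟶ A.X)
    (hδ : A.IsCharacter δ) (hσ : A.IsCocharacter σ) (hbmpi : A.IsBMPI δ σ) :
    ∀ n : ℕ, endoPow (A.cyclicOp δ σ n) (n + 2) = 𝟙 (tensorPow A.X (n + 1)) := by
  intro n
  have key : ∀ k, CycAux.proj A δ n ≫ endoPow (A.cyclicOp δ σ n) k =
      endoPow (CycAux.rot (CycAux.lact A σ A.mul) n) k ≫ CycAux.proj A δ n := by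
    intro k
    induction k with
    | zero => simp [endoPow]
    | succ k ih =>
      rw [endoPow, endoPow, ← Category.assoc, ← CycAux.rot_proj A δ σ hδ hσ hbmpi n, Category.assoc, ih,
        Category.assoc]
  have h := key (n + 2)
  rw [CycAux.rot_pow (CycAux.lact A σ A.mul) (fun n => CycAux.lact A σ (CycAux.act A n)) rfl
    (CycAux.lact_succ A σ hσ)] at h
  have hc := CycAux.proj_coinv A δ hδ n
  unfold CycAux.Coinv at hc
  simp only [CycAux.lact, Category.assoc] at h
  rw [hc, ← comp_whiskerRight_assoc, hbmpi.1, id_whiskerRight, Category.id_comp, Iso.inv_hom_id_assoc] at h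
  have h' := congrArg (CycAux.sect A n ≫ ·) h
  simpa only [← Category.assoc, CycAux.sect_proj A δ hδ n, Category.id_comp] using h'
end

section
/- Let C be an abelian category with a symmetric monoidal structure, H a Hopf monoid in C, and (M, φ, ϱ) a right–left braided stable anti-Yetter–Drinfeld module over H. Let Φ := (m ⊗ m) ∘ (1_H ⊗ ψ_{H,H} ⊗ 1_{H⊗H}) ∘ (Δ ⊗ 1_{H⊗H}) : H ⊗ (H ⊗ H) → H ⊗ H be the diagonal left action, f := (φ ⊗ 1_{H⊗H}) − (1_M ⊗ Φ) : M ⊗ H ⊗ (H ⊗ H) → M ⊗ (H ⊗ H), α := (1_{M⊗H} ⊗ m) ∘ (1_M ⊗ ψ_{H⊗H,H}) ∘ (ψ_{H,M} ⊗ 1_{H⊗H}) ∘ (ϱ ⊗ Δ) : M ⊗ H → M ⊗ H ⊗ H, and β := (1_M ⊗ η ⊗ 1_H) ∘ ψ_{H,M} ∘ ϱ ∘ φ : M ⊗ H → M ⊗ H ⊗ H (all up to suppressed associators/unitors). Then, letting π : M ⊗ H ⊗ H → coker(f) be the cokernel projection, π ∘ α = π ∘ β. -/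
open CategoryTheory MonoidalCategory

universe v u

variable {C : Type u} [Category.{v} C] [MonoidalCategory C] [SymmetricCategory C]
  [Abelian C]

/-- The diagonal left action `Φ = (m ⊗ m) ∘ (1_H ⊗ ψ ⊗ 1_H) ∘ (Δ ⊗ 1_{H⊗H})` of `H`
on `H ⊗ H`. -/
def HopfObj.diag2 (A : _root_.HopfObj C) : A.X ⊗ (A.X ⊗ A.X) ⟶ A.X ⊗ A.X :=
  (A.comul ▷ (A.X ⊗ A.X)) ≫ (α_ A.X A.X (A.X ⊗ A.X)).hom ≫
    (A.X ◁ (α_ A.X A.X A.X).inv) ≫ (A.X ◁ ((β_ A.X A.X).hom ▷ A.X)) ≫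
    (A.X ◁ (α_ A.X A.X A.X).hom) ≫ (α_ A.X A.X (A.X ⊗ A.X)).inv ≫ (A.mul ⊗ₘ A.mul)

theorem HX.lem1 (A : _root_.HopfObj C) :
    A.X ◁ ((λ_ A.X).inv ≫ (A.one ▷ A.X)) ≫ A.diag2 =
      A.comul ▷ A.X ≫ (α_ _ _ _).hom ≫ A.X ◁ A.mul := by
  have h : A.X ◁ ((λ_ A.X).inv ≫ (A.one ▷ A.X)) ≫ (α_ A.X A.X A.X).inv ≫
      (β_ A.X A.X).hom ▷ A.X ≫ (α_ A.X A.X A.X).hom =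
      (λ_ _).inv ≫ A.one ▷ (A.X ⊗ A.X) := by
    have : A.X ◁ A.one ≫ (β_ A.X A.X).hom = (ρ_ _).hom ≫ (λ_ _).inv ≫ A.one ▷ A.X := by
      rw [BraidedCategory.braiding_naturality_right]; simp
    rw [MonoidalCategory.whiskerLeft_comp_assoc, associator_inv_naturality_middle_assoc,
      ← comp_whiskerRight_assoc, this]
    monoidal
  have h2 : A.X ◁ ((λ_ A.X).inv ≫ (A.one ▷ A.X)) ≫ A.diag2 =
     A.comul ▷ A.X ≫ (α_ A.X A.X _).hom ≫ A.X ◁ (A.X ◁ ((λ_ A.X).inv ≫ (A.one ▷ A.X)) ≫ (α_ A.X A.X A.X).inv ≫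
      (β_ A.X A.X).hom ▷ A.X ≫ (α_ A.X A.X A.X).hom) ≫
    (α_ A.X A.X (A.X ⊗ A.X)).inv ≫ (A.mul ⊗ₘ A.mul) := by
    rw [HopfObj.diag2, whisker_exchange_assoc]
    simp
  rw [h2, h, MonoidalCategory.tensorHom_def, MonoidalCategory.whiskerLeft_comp_assoc,
    associator_inv_naturality_middle_assoc, ← comp_whiskerRight_assoc, A.mul_one]
  monoidal

theorem HX.lem2 (A : _root_.HopfObj C) :
    (A.comul ▷ A.X ≫ (α_ _ _ _).hom ≫ A.X ◁ (A.antipode ▷ A.X ≫ A.mul)) ≫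
      A.comul ▷ A.X ≫ (α_ _ _ _).hom ≫ A.X ◁ A.mul = 𝟙 _ := by
  have h : (A.comul ▷ A.X ≫ (α_ _ _ _).hom ≫ A.X ◁ (A.antipode ▷ A.X ≫ A.mul)) ≫
      A.comul ▷ A.X ≫ (α_ _ _ _).hom ≫ A.X ◁ A.mul =
      (A.comul ≫ A.comul ▷ A.X ≫ (α_ _ _ _).hom) ▷ A.X ≫ (α_ _ _ _).hom ≫
        A.X ◁ ((A.X ◁ A.antipode) ▷ A.X ≫ (α_ _ _ _).hom ≫ A.X ◁ A.mul ≫ A.mul) := by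
    simp only [Category.assoc]
    rw [whisker_exchange_assoc]
    monoidal
  rw [h, A.comul_assoc, ← A.mul_assoc, ← comp_whiskerRight_assoc]
  have h' : (A.comul ≫ A.X ◁ A.comul) ▷ A.X ≫ (α_ _ _ _).hom ≫
        A.X ◁ ((A.X ◁ A.antipode ≫ A.mul) ▷ A.X ≫ A.mul) =
      (A.comul ≫ A.X ◁ (A.comul ≫ A.X ◁ A.antipode ≫ A.mul)) ▷ A.X ≫ (α_ _ _ _).hom ≫
        A.X ◁ A.mul := by monoidal
  rw [h', A.antipode_right, MonoidalCategory.whiskerLeft_comp, reassoc_of% A.comul_counit]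
  have h'' : ((ρ_ A.X).inv ≫ A.X ◁ A.one) ▷ A.X ≫ (α_ A.X A.X A.X).hom ≫ A.X ◁ A.mul =
     (ρ_ A.X).inv ▷ A.X ≫ (α_ _ _ _).hom ≫ A.X ◁ (A.one ▷ A.X ≫ A.mul) := by monoidal
  rw [h'', A.one_mul]
  monoidal

theorem HX.cross3 (Y D E : C) :
    Y ◁ (β_ D E).hom ≫ (α_ _ _ _).inv ≫ (β_ Y E).hom ▷ D ≫ (β_ (E ⊗ Y) D).hom =
     (α_ _ _ _).inv ≫ (β_ Y D).hom ▷ E ≫ (α_ _ _ _).hom ≫ D ◁ (β_ Y E).hom := by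
  rw [BraidedCategory.braiding_naturality_left]
  rw [BraidedCategory.braiding_tensor_left_hom]
  simp [← MonoidalCategory.whiskerLeft_comp_assoc]

theorem HX.perm (X M P Q R : C) :
    (α_ X M (P ⊗ (Q ⊗ R))).hom ≫
        (X ◁ ((α_ M P (Q ⊗ R)).inv ≫ ((β_ M P).hom ▷ (Q ⊗ R)) ≫
          (α_ P M (Q ⊗ R)).hom)) ≫
        (X ◁ (P ◁ (M ◁ (β_ Q R).hom))) ≫
        (X ◁ (P ◁ ((α_ M R Q).inv ≫ ((β_ M R).hom ▷ Q) ≫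
          (α_ R M Q).hom))) ≫
        (α_ X P (R ⊗ (M ⊗ Q))).inv ≫
        (α_ (X ⊗ P) R (M ⊗ Q)).inv ≫
        ((β_ (X ⊗ P) R).hom ▷ (M ⊗ Q)) ≫ (β_ (R ⊗ (X ⊗ P)) (M ⊗ Q)).hom ≫ (α_ _ _ _).hom =
     (β_ X M).hom ▷ (P ⊗ (Q ⊗ R)) ≫ (α_ _ _ _).hom ≫ M ◁ ((α_ _ _ _).inv ≫
       (β_ (X ⊗ P) (Q ⊗ R)).hom ≫ (α_ _ _ _).hom) := by
  have hx : M ◁ (β_ Q R).hom ≫ (α_ M R Q).inv ≫ ((β_ M R).hom ▷ Q) ≫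
          (α_ R M Q).hom = (α_ _ _ _).inv ≫ (β_ (M ⊗ Q) R).hom := by
    rw [BraidedCategory.braiding_tensor_left_hom]; simp
  have h1 : (X ◁ (P ◁ (M ◁ (β_ Q R).hom))) ≫
        (X ◁ (P ◁ ((α_ M R Q).inv ≫ ((β_ M R).hom ▷ Q) ≫
          (α_ R M Q).hom))) ≫
        (α_ X P (R ⊗ (M ⊗ Q))).inv = (α_ _ _ _).inv ≫ (X ⊗ P) ◁ ((α_ _ _ _).inv ≫ (β_ (M ⊗ Q) R).hom) := by
    rw [← hx]; monoidal
  rw [reassoc_of% h1, MonoidalCategory.whiskerLeft_comp_assoc (X ⊗ P), reassoc_of% HX.cross3 (X ⊗ P) (M ⊗ Q) R]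
  rw [BraidedCategory.braiding_tensor_right_hom (X ⊗ P) M Q]
  rw [BraidedCategory.braiding_tensor_left_hom X P M]
  rw [BraidedCategory.braiding_tensor_right_hom (X ⊗ P) Q R]
  have hs : (β_ M P).hom ≫ (β_ P M).hom = 𝟙 _ := SymmetricCategory.symmetry _ _
  have h2 : (α_ X M (P ⊗ (Q ⊗ R))).hom ≫
        (X ◁ ((α_ M P (Q ⊗ R)).inv ≫ ((β_ M P).hom ▷ (Q ⊗ R)) ≫
          (α_ P M (Q ⊗ R)).hom)) ≫ (α_ _ _ _).inv ≫ (X ⊗ P) ◁ (α_ M Q R).inv ≫ (α_ _ _ _).inv ≫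
      ((α_ (X ⊗ P) M Q).inv ≫
          ((α_ X P M).hom ≫ X ◁ (β_ P M).hom ≫ (α_ X M P).inv ≫ (β_ X M).hom ▷ P ≫ (α_ M X P).hom) ▷ Q) ▷ R
      = 
      (α_ X M (P ⊗ (Q ⊗ R))).hom ≫ (X ◁ (α_ M P (Q ⊗ R)).inv) ≫
        (X ◁ (((β_ M P).hom ≫ (β_ P M).hom) ▷ (Q ⊗ R))) ≫ X ◁ (α_ _ _ _).hom ≫ (α_ _ _ _).inv ≫
         (β_ X M).hom ▷ _ ≫ (α_ _ _ _).inv ≫ (α_ _ _ _).hom ▷ _ ≫ (α_ _ _ _).inv := by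
    monoidal
  rw [hs] at h2
  have h3 := h2 =≫ (((α_ M (X ⊗ P) Q).hom ≫ M ◁ (β_ (X ⊗ P) Q).hom ≫ (α_ M Q (X ⊗ P)).inv) ▷ R ≫
       (α_ _ _ _).hom ≫ (M ⊗ Q) ◁ (β_ (X ⊗ P) R).hom ≫ (α_ _ _ _).hom)
  simp only [Category.assoc] at h3
  simp only [comp_whiskerRight, Category.assoc] at h3 ⊢
  rw [h3]
  monoidal

theorem HX.lem3 (A : _root_.HopfObj C) (M : C) (ϱ : M ⟶ A.X ⊗ M) :
    ((ϱ ⊗ₘ (A.comul ≫ (A.X ◁ A.comul))) ≫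
        (α_ A.X M (A.X ⊗ (A.X ⊗ A.X))).hom ≫
        (A.X ◁ ((α_ M A.X (A.X ⊗ A.X)).inv ≫ ((β_ M A.X).hom ▷ (A.X ⊗ A.X)) ≫
          (α_ A.X M (A.X ⊗ A.X)).hom)) ≫
        (A.X ◁ (A.X ◁ (M ◁ (β_ A.X A.X).hom))) ≫
        (A.X ◁ (A.X ◁ ((α_ M A.X A.X).inv ≫ ((β_ M A.X).hom ▷ A.X) ≫
          (α_ A.X M A.X).hom))) ≫
        (α_ A.X A.X (A.X ⊗ (M ⊗ A.X))).inv ≫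
        (α_ (A.X ⊗ A.X) A.X (M ⊗ A.X)).inv ≫
        ((β_ (A.X ⊗ A.X) A.X).hom ▷ (M ⊗ A.X)) ≫
        (((A.antipode ⊗ₘ A.mul) ≫ A.mul) ▷ _)) ≫ (β_ A.X (M ⊗ A.X)).hom ≫ (α_ _ _ _).hom =
    ((ϱ ⊗ₘ A.comul) ≫ ((β_ A.X M).hom ▷ (A.X ⊗ A.X)) ≫ (α_ M A.X (A.X ⊗ A.X)).hom ≫
        (M ◁ (α_ A.X A.X A.X).inv) ≫ (M ◁ (β_ (A.X ⊗ A.X) A.X).hom) ≫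
        (M ◁ (A.X ◁ A.mul))) ≫
      M ◁ (A.comul ▷ A.X ≫ (α_ _ _ _).hom ≫ A.X ◁ (A.antipode ▷ A.X ≫ A.mul)) := by
  simp only [Category.assoc]
  rw [BraidedCategory.braiding_naturality_left_assoc,
    associator_naturality_right, reassoc_of% HX.perm A.X M A.X A.X A.X]
  have h1 : (β_ (A.X ⊗ A.X) A.X).hom ≫ A.X ◁ A.mul ≫
      (A.comul ▷ A.X ≫ (α_ _ _ _).hom ≫ A.X ◁ (A.antipode ▷ A.X ≫ A.mul)) =
      (A.X ⊗ A.X) ◁ A.comul ≫ (β_ (A.X ⊗ A.X) (A.X ⊗ A.X)).hom ≫ (α_ _ _ _).hom ≫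
        A.X ◁ ((A.antipode ⊗ₘ A.mul) ≫ A.mul) := by
    rw [BraidedCategory.braiding_naturality_right_assoc, whisker_exchange_assoc,
      MonoidalCategory.tensorHom_def']
    monoidal
  simp only [← MonoidalCategory.whiskerLeft_comp]
  rw [h1]
  simp only [Category.assoc]
  have h2 : (ϱ ⊗ₘ (A.comul ≫ (A.X ◁ A.comul))) = (ϱ ⊗ₘ A.comul) ≫ _ ◁ _ ◁ A.comul := by
    rw [MonoidalCategory.tensorHom_def, MonoidalCategory.tensorHom_def]; monoidal
  rw [h2, Category.assoc, whisker_exchange_assoc]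
  monoidal

/-- For a right–left braided stable anti-Yetter–Drinfeld module
`(M, φ, ϱ)` over a Hopf monoid `H` in an abelian symmetric monoidal category, with
`f = (φ ⊗ 1_{H⊗H}) - (1_M ⊗ Φ)` and `π` the cokernel projection of `f`,
one has `π ∘ α = π ∘ β`. -/
theorem HopfObj.sayd_cokernel_eq (A : _root_.HopfObj C) (M : C)
    (φ : M ⊗ A.X ⟶ M) (ϱ : M ⟶ A.X ⊗ M)
    (hact : (M ◁ A.mul) ≫ φ = (α_ M A.X A.X).inv ≫ (φ ▷ A.X) ≫ φ)
    (hact_one : (M ◁ A.one) ≫ φ = (ρ_ M).hom)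
    (hcoact : ϱ ≫ (A.comul ▷ M) ≫ (α_ A.X A.X M).hom = ϱ ≫ (A.X ◁ ϱ))
    (hcoact_counit : ϱ ≫ (A.counit ▷ M) = (λ_ M).inv)
    (hayd : φ ≫ ϱ =
      (ϱ ⊗ₘ (A.comul ≫ (A.X ◁ A.comul))) ≫
        (α_ A.X M (A.X ⊗ (A.X ⊗ A.X))).hom ≫
        (A.X ◁ ((α_ M A.X (A.X ⊗ A.X)).inv ≫ ((β_ M A.X).hom ▷ (A.X ⊗ A.X)) ≫
          (α_ A.X M (A.X ⊗ A.X)).hom)) ≫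
        (A.X ◁ (A.X ◁ (M ◁ (β_ A.X A.X).hom))) ≫
        (A.X ◁ (A.X ◁ ((α_ M A.X A.X).inv ≫ ((β_ M A.X).hom ▷ A.X) ≫
          (α_ A.X M A.X).hom))) ≫
        (α_ A.X A.X (A.X ⊗ (M ⊗ A.X))).inv ≫
        (α_ (A.X ⊗ A.X) A.X (M ⊗ A.X)).inv ≫
        ((β_ (A.X ⊗ A.X) A.X).hom ▷ (M ⊗ A.X)) ≫
        (((A.antipode ⊗ₘ A.mul) ≫ A.mul) ⊗ₘ φ))
    (hstable : ϱ ≫ (β_ A.X M).hom ≫ φ = 𝟙 M) :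
    ((ϱ ⊗ₘ A.comul) ≫ ((β_ A.X M).hom ▷ (A.X ⊗ A.X)) ≫ (α_ M A.X (A.X ⊗ A.X)).hom ≫
        (M ◁ (α_ A.X A.X A.X).inv) ≫ (M ◁ (β_ (A.X ⊗ A.X) A.X).hom) ≫
        (M ◁ (A.X ◁ A.mul))) ≫
      Limits.cokernel.π
        (((α_ M A.X (A.X ⊗ A.X)).inv ≫ (φ ▷ (A.X ⊗ A.X))) - (M ◁ A.diag2)) =
    (φ ≫ ϱ ≫ (β_ A.X M).hom ≫ (M ◁ ((λ_ A.X).inv ≫ (A.one ▷ A.X)))) ≫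
      Limits.cokernel.π
        (((α_ M A.X (A.X ⊗ A.X)).inv ≫ (φ ▷ (A.X ⊗ A.X))) - (M ◁ A.diag2)) := by
  have hT : ∀ (T : M ⊗ A.X ⟶ A.X ⊗ (M ⊗ A.X)), φ ≫ ϱ = T ≫ A.X ◁ φ →
      φ ≫ ϱ ≫ (β_ A.X M).hom ≫ (M ◁ ((λ_ A.X).inv ≫ (A.one ▷ A.X))) =
      (T ≫ (β_ A.X (M ⊗ A.X)).hom ≫ (M ⊗ A.X) ◁ ((λ_ A.X).inv ≫ (A.one ▷ A.X)) ≫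
        (α_ _ _ _).hom) ≫ (α_ M A.X (A.X ⊗ A.X)).inv ≫ (φ ▷ (A.X ⊗ A.X)) := by
    intro T h
    rw [reassoc_of% h, BraidedCategory.braiding_naturality_right_assoc, ← whisker_exchange]
    simp only [Category.assoc, Iso.hom_inv_id_assoc]
  have hc : ((α_ M A.X (A.X ⊗ A.X)).inv ≫ (φ ▷ (A.X ⊗ A.X))) ≫ Limits.cokernel.π
        (((α_ M A.X (A.X ⊗ A.X)).inv ≫ (φ ▷ (A.X ⊗ A.X))) - (M ◁ A.diag2)) =
      (M ◁ A.diag2) ≫ Limits.cokernel.π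
        (((α_ M A.X (A.X ⊗ A.X)).inv ≫ (φ ▷ (A.X ⊗ A.X))) - (M ◁ A.diag2)) := by
    rw [← sub_eq_zero, ← Preadditive.sub_comp, Limits.cokernel.condition]
  generalize Limits.cokernel.π
        (((α_ M A.X (A.X ⊗ A.X)).inv ≫ (φ ▷ (A.X ⊗ A.X))) - (M ◁ A.diag2)) = p at hc ⊢
  have h3 := HX.lem3 A M ϱ
  have hayd' := hayd
  rw [MonoidalCategory.tensorHom_def _ φ] at hayd'
  simp only [← Category.assoc] at hayd' h3
  rw [hT _ hayd']
  have h4 : (M ⊗ A.X) ◁ ((λ_ A.X).inv ≫ (A.one ▷ A.X)) ≫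
        (α_ _ _ _).hom ≫ M ◁ A.diag2 = (α_ _ _ _).hom ≫ M ◁ (A.comul ▷ A.X ≫ (α_ _ _ _).hom ≫ A.X ◁ A.mul) := by
    rw [← HX.lem1, associator_naturality_right_assoc, ← MonoidalCategory.whiskerLeft_comp]
  have h5 := h3 =≫ (M ◁ (A.comul ▷ A.X ≫ (α_ _ _ _).hom ≫ A.X ◁ A.mul) ≫ p)
  have h2 := HX.lem2 A
  simp only [Category.assoc] at h2 h5 hc ⊢
  rw [hc]
  rw [reassoc_of% h4, h5]
  have h6 := congrArg (fun t => M ◁ t ≫ p) (HX.lem2 A)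
  simp only [MonoidalCategory.whiskerLeft_comp _ (_ ≫ _) (_ ≫ _), Category.assoc,
    MonoidalCategory.whiskerLeft_id, Category.id_comp] at h6
  rw [MonoidalCategory.whiskerLeft_comp_assoc] at h6
  simp only [MonoidalCategory.whiskerLeft_comp, Category.assoc] at h6 ⊢
  rw [h6]
end
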